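/- arXiv:1201.5253 — 5 statements merged into one kernel-verified Lean document; each statement's English description precedes it below -/
import Mathlib

section
/- For every integer n ≥ 0, the Pfaffian of the 2n×2n skew-symmetric matrix whose (i,j) entry is (j−i)·S_{i+j−2} for 1 ≤ i,j ≤ 2n equals 2^{n²}·∏_{k=0}^{n−1} (4k+1). -/
/-- The Pfaffian of a `2N × 2N` matrix, defined as the sum over all partitions of
the index set into two-element blocks (encoded as permutations `σ` with
`σ(2i) < σ(2i+1)` and `σ(0) < σ(2) < … < σ(2N-2)`, one for each partition) of the
sign of `σ` times the product `∏ i, A (σ (2i)) (σ (2i+1))`. -/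
def pfaffian {R : Type*} [CommRing R] {N : ℕ}
    (A : Matrix (Fin (2 * N)) (Fin (2 * N)) R) : R :=
  ∑ σ ∈ Finset.univ.filter (fun σ : Equiv.Perm (Fin (2 * N)) =>
      (∀ i : Fin N, σ ⟨2 * i.val, by have := i.isLt; omega⟩
          < σ ⟨2 * i.val + 1, by have := i.isLt; omega⟩) ∧
      (∀ i j : Fin N, i < j → σ ⟨2 * i.val, by have := i.isLt; omega⟩
          < σ ⟨2 * j.val, by have := j.isLt; omega⟩)),
    (Equiv.Perm.sign σ : ℤ) •
      ∏ i : Fin N, A (σ ⟨2 * i.val, by have := i.isLt; omega⟩)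
        (σ ⟨2 * i.val + 1, by have := i.isLt; omega⟩)

/-- The `n`-th large Schröder number `S_n = ∑_{k=0}^{n} (1/(k+1))·C(n+k,2k)·C(2k,k)`. -/
def schroeder (n : ℕ) : ℚ :=
  ∑ k ∈ Finset.range (n + 1),
    (1 / ((k : ℚ) + 1)) * ((n + k).choose (2 * k)) * ((2 * k).choose k)

/-!
The matrix is the Gram matrix, in the basis `1, X, X², …`, of the alternating form
`(f, g) ↦ L (f g' - f' g)`, where `L` is the functional with moments `L (X ^ n) = S_{n+1}`. The sum
over all permutations that antisymmetrizes `∏ i, ω (v (2i)) (v (2i+1))` counts each partition into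
blocks the same number of times, so the Pfaffian of a Gram matrix is, up to this factor, an
alternating multilinear map; hence it is multiplied by the determinant under a change of basis, and
the monomials may be replaced with any monic polynomials.

The recurrence of the Schröder numbers says that `L` kills `(x² - 6x + 1) f' + 3 (x - 3) f` for
every `f`. After the shift `x ↦ x + 3` this is the Pearson equation of the weight `√(8 - x²)`, whose
orthogonal polynomials are the Dickson polynomials of the second kind with parameter `2`. Since the
Wronskian of two Dickson polynomials of the first kind is a combination of two of the second kind,
the Gram matrix in the basis of shifted Dickson polynomials of the first kind is tridiagonal, and
its Pfaffian is a product of superdiagonal entries.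
-/

open Equiv Polynomial

section Pfaffian

/-- The splitting of `Fin (2 * N)` into the blocks `{2i, 2i+1}`: the pair `(i, b)` stands for
`2i + b`. -/
def blockEquiv (N : ℕ) : Fin N × Fin 2 ≃ Fin (2 * N) :=
  finProdFinEquiv.trans (finCongr (mul_comm N 2))

lemma val_blockEquiv {N : ℕ} (i : Fin N) (b : Fin 2) :
    (blockEquiv N (i, b)).val = 2 * i.val + b.val := by
  simp [blockEquiv, add_comm]

/-- The permutations that enumerate a partition into two-element blocks in the normalized order
used by `pfaffian`. -/
def IsMatching {N : ℕ} (σ : Perm (Fin (2 * N))) : Prop :=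
  (∀ i, StrictMono fun b => σ (blockEquiv N (i, b))) ∧ StrictMono fun i => σ (blockEquiv N (i, 0))

/-- The summand of the Pfaffian attached to `σ`, defined for every permutation `σ`. -/
def pfaffianTerm {R : Type*} [CommRing R] {N : ℕ} (A : Matrix (Fin (2 * N)) (Fin (2 * N)) R)
    (σ : Perm (Fin (2 * N))) : R :=
  Perm.sign σ • ∏ i, A (σ (blockEquiv N (i, 0))) (σ (blockEquiv N (i, 1)))

/-- The permutation that applies `e i` inside the block `i` after moving whole blocks by `π`. These
permutations form the stabilizer of the standard partition into blocks. -/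
def blockPerm {N : ℕ} (e : Fin N → Perm (Fin 2)) (π : Perm (Fin N)) : Perm (Fin (2 * N)) :=
  (blockEquiv N).permCongr (prodCongrRight e * prodCongrLeft fun _ => π)

variable {R : Type*} [CommRing R] {N : ℕ}

open Classical in
lemma pfaffian_eq_sum_isMatching (A : Matrix (Fin (2 * N)) (Fin (2 * N)) R) :
    pfaffian A = ∑ σ, if IsMatching σ then pfaffianTerm A σ else 0 := by
  have even (i : Fin N) (h : 2 * i.val < 2 * N) : ⟨2 * i.val, h⟩ = blockEquiv N (i, 0) :=
    Fin.ext (val_blockEquiv i 0).symm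
  have odd (i : Fin N) (h : 2 * i.val + 1 < 2 * N) : ⟨2 * i.val + 1, h⟩ = blockEquiv N (i, 1) :=
    Fin.ext (val_blockEquiv i 1).symm
  rw [← Finset.sum_filter]
  refine Finset.sum_congr (Finset.filter_congr fun σ _ => ?_) fun σ _ => ?_
  · simp [IsMatching, StrictMono, even, odd]
  · simp only [pfaffianTerm, even, odd, Units.smul_def]

lemma blockPerm_apply (e : Fin N → Perm (Fin 2)) (π : Perm (Fin N)) (i : Fin N) (b : Fin 2) :
    blockPerm e π (blockEquiv N (i, b)) = blockEquiv N (π i, e (π i) b) := by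
  simp [blockPerm, permCongr_apply]

lemma sign_blockPerm (e : Fin N → Perm (Fin 2)) (π : Perm (Fin N)) :
    Perm.sign (blockPerm e π) = ∏ i, Perm.sign (e i) := by
  simp [blockPerm, Perm.sign_permCongr, Perm.sign_prodCongrRight, Perm.sign_prodCongrLeft]

lemma apply_perm_fin_two {ι : Type*} {A : Matrix ι ι R} (hA : ∀ i j, A j i = -A i j)
    (x : Fin 2 → ι) (e : Perm (Fin 2)) : A (x (e 0)) (x (e 1)) = Perm.sign e • A (x 0) (x 1) := by
  obtain rfl | rfl : e = 1 ∨ e = swap 0 1 := by decide +revert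
  · simp
  · simp [hA (x 0) (x 1)]

lemma pfaffianTerm_mul_blockPerm {A : Matrix (Fin (2 * N)) (Fin (2 * N)) R}
    (hA : ∀ i j, A j i = -A i j) (σ : Perm (Fin (2 * N))) (e : Fin N → Perm (Fin 2))
    (π : Perm (Fin N)) : pfaffianTerm A (σ * blockPerm e π) = pfaffianTerm A σ := by
  simp only [pfaffianTerm, Perm.mul_apply, blockPerm_apply, Perm.sign_mul, sign_blockPerm,
    fun j => apply_perm_fin_two hA (fun b => σ (blockEquiv N (j, b))) (e j)]
  rw [prod_comp π fun j => Perm.sign (e j) • A (σ (blockEquiv N (j, 0))) (σ (blockEquiv N (j, 1))),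
    Finset.prod_smul, smul_smul, mul_assoc, Int.units_mul_self, mul_one]

lemma existsUnique_perm_strictMono {n : ℕ} {α : Type*} [LinearOrder α] {f : Fin n → α}
    (hf : f.Injective) : ∃! π : Perm (Fin n), StrictMono fun i => f (π i) := by
  refine ⟨Tuple.sort f, (Tuple.monotone_sort f).strictMono_of_injective
    (hf.comp (Tuple.sort f).injective), fun π hπ => Equiv.ext fun i => hf ?_⟩
  exact congrFun (Tuple.unique_monotone hπ.monotone (Tuple.monotone_sort f)) i

lemma existsUnique_isMatching_mul_blockPerm (τ : Perm (Fin (2 * N))) :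
    ∃! p : (Fin N → Perm (Fin 2)) × Perm (Fin N), IsMatching (τ * blockPerm p.1 p.2) := by
  have inj : Function.Injective fun p => τ (blockEquiv N p) :=
    τ.injective.comp (blockEquiv N).injective
  choose e he e_unique using fun i =>
    existsUnique_perm_strictMono (inj.comp (Prod.mk_right_injective i))
  obtain ⟨π, hπ, π_unique⟩ :=
    existsUnique_perm_strictMono (f := fun i => τ (blockEquiv N (i, e i 0)))
      fun i j h => congrArg Prod.fst (inj h)
  refine ⟨(e, π), ⟨fun i => ?_, ?_⟩, ?_⟩
  · simp only [Perm.mul_apply, blockPerm_apply]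
    exact he (π i)
  · simpa only [Perm.mul_apply, blockPerm_apply] using hπ
  · rintro ⟨e', π'⟩ ⟨h_in, h_out⟩
    simp only [Perm.mul_apply, blockPerm_apply] at h_in h_out
    obtain rfl : e' = e := funext fun i => e_unique i _ <| by simpa using h_in (π'.symm i)
    rw [π_unique π' h_out]

theorem sum_pfaffianTerm {A : Matrix (Fin (2 * N)) (Fin (2 * N)) R} (hA : ∀ i j, A j i = -A i j) :
    ∑ σ, pfaffianTerm A σ =
      Fintype.card ((Fin N → Perm (Fin 2)) × Perm (Fin N)) • pfaffian A := by
  classical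
  calc ∑ σ, pfaffianTerm A σ
      = ∑ σ, ∑ p : (Fin N → Perm (Fin 2)) × Perm (Fin N),
          if IsMatching (σ * blockPerm p.1 p.2) then pfaffianTerm A σ else 0 := by
        refine Finset.sum_congr rfl fun σ _ => ?_
        obtain ⟨p, hp, p_unique⟩ := existsUnique_isMatching_mul_blockPerm σ
        rw [Fintype.sum_eq_single p fun q hq => if_neg fun h => hq (p_unique q h), if_pos hp]
    _ = ∑ _p : (Fin N → Perm (Fin 2)) × Perm (Fin N), pfaffian A := by
        rw [Finset.sum_comm]
        refine Finset.sum_congr rfl fun p _ => ?_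
        rw [pfaffian_eq_sum_isMatching, ← Equiv.sum_comp (Equiv.mulRight (blockPerm p.1 p.2))
          fun σ => if IsMatching σ then pfaffianTerm A σ else 0]
        simp only [coe_mulRight, pfaffianTerm_mul_blockPerm hA]
    _ = _ := by rw [Finset.sum_const, Finset.card_univ]

variable {M : Type*} [AddCommGroup M] [Module R M]

/-- The multilinear map `v ↦ ∏ i, ω (v (2i)) (v (2i+1))`, whose alternatization is a multiple of the
Pfaffian of the Gram matrix of `ω`. -/
def blockProd (N : ℕ) (ω : M →ₗ[R] M →ₗ[R] R) :
    MultilinearMap R (fun _ : Fin (2 * N) => M) R :=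
  have factor_update (v : Fin (2 * N) → M) (i : Fin N) (b : Fin 2) (x : M) :
      (fun k => ω (Function.update v (blockEquiv N (i, b)) x (blockEquiv N (k, 0)))
        (Function.update v (blockEquiv N (i, b)) x (blockEquiv N (k, 1)))) =
      Function.update (fun k => ω (v (blockEquiv N (k, 0))) (v (blockEquiv N (k, 1)))) i
        (if b = 0 then ω x (v (blockEquiv N (i, 1))) else ω (v (blockEquiv N (i, 0))) x) := by
    funext k
    obtain rfl | hk := eq_or_ne k i
    · fin_cases b <;> simp
    · simp [hk]
  .mk' (fun v => ∏ i, ω (v (blockEquiv N (i, 0))) (v (blockEquiv N (i, 1))))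
    (fun v j x y => by
      obtain ⟨⟨i, b⟩, rfl⟩ := (blockEquiv N).surjective j
      simp only [factor_update, Finset.prod_update_of_mem (Finset.mem_univ i), ← add_mul]
      split_ifs <;> simp)
    (fun v j c x => by
      obtain ⟨⟨i, b⟩, rfl⟩ := (blockEquiv N).surjective j
      simp only [factor_update, Finset.prod_update_of_mem (Finset.mem_univ i), ← smul_mul_assoc]
      split_ifs <;> simp)

lemma alternatization_blockProd (ω : M →ₗ[R] M →ₗ[R] R) (v : Fin (2 * N) → M) :
    (blockProd N ω).alternatization v =
      ∑ σ, pfaffianTerm (Matrix.of fun i j => ω (v i) (v j)) σ := by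
  rw [MultilinearMap.alternatization_apply]
  rfl

theorem pfaffian_gram_eq_det_mul [IsAddTorsionFree R] {ω : M →ₗ[R] M →ₗ[R] R} (hω : ω.IsAlt)
    (e : Module.Basis (Fin (2 * N)) R M) (v : Fin (2 * N) → M) :
    pfaffian (Matrix.of fun i j => ω (v i) (v j)) =
      e.det v * pfaffian (Matrix.of fun i j => ω (e i) (e j)) := by
  have sum_gram (w : Fin (2 * N) → M) :=
    sum_pfaffianTerm (A := Matrix.of fun i j => ω (w i) (w j)) fun i j => (hω.neg _ _).symm
  have key := DFunLike.congr_fun ((blockProd N ω).alternatization.eq_smul_basis_det e) v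
  rw [AlternatingMap.smul_apply, alternatization_blockProd, alternatization_blockProd,
    sum_gram, sum_gram, smul_eq_mul, smul_mul_assoc] at key
  rw [nsmul_right_injective Fintype.card_ne_zero key, mul_comm]

theorem pfaffian_gram_eq_of_monic [IsAddTorsionFree R] {ω : R[X] →ₗ[R] R[X] →ₗ[R] R}
    (hω : ω.IsAlt) {p : ℕ → R[X]} (hp : ∀ n, IsMonicOfDegree (p n) n) :
    pfaffian (Matrix.of fun i j : Fin (2 * N) => ω (p i) (p j)) =
      pfaffian (Matrix.of fun i j : Fin (2 * N) => ω (X ^ i.val) (X ^ j.val)) := by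
  let e := degreeLT.basis R (2 * N)
  let v (i : Fin (2 * N)) : degreeLT R (2 * N) :=
    ⟨p i, mem_degreeLT.2 <| degree_le_natDegree.trans_lt <| by
      rw [(hp i).natDegree_eq]
      exact_mod_cast i.isLt⟩
  have det_eq_one : e.det v = 1 := by
    rw [Module.Basis.det_apply]
    convert Matrix.det_matrixOfPolynomials (fun i : Fin (2 * N) => p i)
      (fun i => (hp i).natDegree_eq) (fun i => (hp i).monic)
    ext i j
    simp [e, v, Module.Basis.toMatrix_apply, degreeLT.basis_repr]
  have key := pfaffian_gram_eq_det_mul (ω := ω.domRestrict₁₂ _ _) (fun f => hω f) e v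
  simpa [e, v, det_eq_one, LinearMap.domRestrict₁₂_apply] using key

lemma eq_one_of_isMatching_of_consecutive {σ : Perm (Fin (2 * N))} (hσ : IsMatching σ)
    (h : ∀ i, (σ (blockEquiv N (i, 1))).val ≤ (σ (blockEquiv N (i, 0))).val + 1) : σ = 1 := by
  suffices StrictMono σ from
    (existsUnique_perm_strictMono (Function.injective_id (α := Fin (2 * N)))).unique this
      strictMono_id
  intro x y hxy
  obtain ⟨⟨i, b⟩, rfl⟩ := (blockEquiv N).surjective x
  obtain ⟨⟨j, c⟩, rfl⟩ := (blockEquiv N).surjective y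
  rw [Fin.lt_def, val_blockEquiv, val_blockEquiv] at hxy
  obtain rfl | hij := eq_or_ne i j
  · exact hσ.1 i (by omega)
  · have hle : σ (blockEquiv N (i, b)) ≤ σ (blockEquiv N (j, c)) := by
      have first_lt : σ (blockEquiv N (i, 0)) < σ (blockEquiv N (j, 0)) := hσ.2 (by omega)
      have le_last := (hσ.1 i).monotone (Fin.le_last b)
      have first_le := (hσ.1 j).monotone (Fin.zero_le c)
      have := h i
      simp only [Fin.lt_def, Fin.le_def] at *
      exact le_last.trans (this.trans (Nat.succ_le_of_lt first_lt |>.trans first_le))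
    exact hle.lt_of_ne fun heq => hij <|
      congrArg Prod.fst ((blockEquiv N).injective (σ.injective heq))

lemma isMatching_one : IsMatching (1 : Perm (Fin (2 * N))) := by
  constructor
  · intro i b c h
    simp only [Perm.one_apply, Fin.lt_def, val_blockEquiv] at h ⊢
    omega
  · intro i j h
    simp only [Perm.one_apply, Fin.lt_def, val_blockEquiv] at h ⊢
    omega

theorem pfaffian_of_upper_band {A : Matrix (Fin (2 * N)) (Fin (2 * N)) R}
    (hA : ∀ i j, i.val + 1 < j.val → A i j = 0) :
    pfaffian A = ∏ i, A (blockEquiv N (i, 0)) (blockEquiv N (i, 1)) := by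
  classical
  rw [pfaffian_eq_sum_isMatching, Fintype.sum_eq_single 1, if_pos isMatching_one]
  · simp [pfaffianTerm]
  · intro σ hne
    refine ite_eq_right_iff.2 fun hσ => ?_
    obtain ⟨i, hi⟩ : ∃ i, (σ (blockEquiv N (i, 0))).val + 1 < (σ (blockEquiv N (i, 1))).val := by
      contrapose! hne
      exact eq_one_of_isMatching_of_consecutive hσ hne
    rw [pfaffianTerm, Finset.prod_eq_zero (Finset.mem_univ i) (hA _ _ hi), smul_zero]

end Pfaffian

section SchroederRecurrence

/-- The number of Schröder paths of semilength `n` with exactly `k` up steps, the `k`-th summand of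
`schroeder n`. -/
def schroederTerm (n k : ℕ) : ℚ :=
  (n + k).choose (2 * k) * catalan k

lemma schroederTerm_eq_zero {n k : ℕ} (h : n < k) : schroederTerm n k = 0 := by
  rw [schroederTerm, Nat.choose_eq_zero_of_lt (by lia), Nat.cast_zero, zero_mul]

lemma schroeder_eq_sum_schroederTerm {n m : ℕ} (h : n < m) :
    schroeder n = ∑ k ∈ Finset.range m, schroederTerm n k := by
  have summand_eq (k : ℕ) :
      1 / ((k : ℚ) + 1) * (n + k).choose (2 * k) * (2 * k).choose k = schroederTerm n k := by
    have hk : ((k + 1 : ℕ) * catalan k : ℚ) = (2 * k).choose k :=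
      mod_cast succ_mul_catalan_eq_centralBinom k
    rw [schroederTerm, ← hk]
    push_cast
    field_simp
  simp only [schroeder, summand_eq]
  refine Finset.sum_subset (Finset.range_mono h) fun k _ hk => schroederTerm_eq_zero ?_
  simpa using hk

lemma add_two_mul_catalan_succ (k : ℕ) :
    (k + 2) * catalan (k + 1) = 2 * (2 * k + 1) * catalan k := by
  refine Nat.eq_of_mul_eq_mul_left (Nat.add_one_pos k) ?_
  calc (k + 1) * ((k + 2) * catalan (k + 1))
      = (k + 1) * (k + 1).centralBinom := by rw [← succ_mul_catalan_eq_centralBinom]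
    _ = 2 * (2 * k + 1) * ((k + 1) * catalan k) := by
        rw [Nat.succ_mul_centralBinom_succ, succ_mul_catalan_eq_centralBinom]
    _ = (k + 1) * (2 * (2 * k + 1) * catalan k) := by ring

lemma choose_add_three_term_recurrence (n k : ℕ) :
    (2 * k + 1 : ℚ) * ((n + 3) * (n + 2 + (k + 1)).choose (2 * (k + 1)) -
      (2 * n + 3) * (n + 1 + (k + 1)).choose (2 * (k + 1)) +
      n * (n + (k + 1)).choose (2 * (k + 1))) =
    (2 * n + 3) * (k + 2) * (n + 1 + k).choose (2 * k) := by
  have absorb : (2 * k + 1 : ℚ) * (n + k + 1).choose (2 * k + 1) =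
      (n + 1 - k) * (n + k + 1).choose (2 * k) := by
    obtain h | h := le_or_gt (2 * k) (n + k + 1)
    · have key := congrArg (Nat.cast (R := ℚ)) (Nat.choose_succ_right_eq (n + k + 1) (2 * k))
      push_cast [Nat.cast_sub h] at key
      linear_combination key
    · simp [Nat.choose_eq_zero_of_lt, h, Nat.lt_succ_of_lt h]
  rw [show n + 2 + (k + 1) = n + k + 1 + 1 + 1 by ring, show 2 * (k + 1) = 2 * k + 1 + 1 by ring,
    show n + 1 + (k + 1) = n + k + 1 + 1 by ring, show n + 1 + k = n + k + 1 by ring,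
    show n + (k + 1) = n + k + 1 by ring]
  simp only [Nat.choose_succ_succ (n + k + 1), Nat.choose_succ_succ (n + k + 1 + 1)]
  push_cast
  linear_combination 3 * absorb

lemma schroederTerm_recurrence (n k : ℕ) :
    (n + 3) * schroederTerm (n + 2) (k + 1) - (2 * n + 3) * schroederTerm (n + 1) (k + 1) +
      n * schroederTerm n (k + 1) = 2 * (2 * n + 3) * schroederTerm (n + 1) k := by
  have hcat : (k + 2 : ℚ) * catalan (k + 1) = 2 * (2 * k + 1) * catalan k :=
    mod_cast add_two_mul_catalan_succ k
  refine mul_left_cancel₀ (by positivity : (2 * k + 1 : ℚ) ≠ 0) ?_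
  simp only [schroederTerm]
  linear_combination (catalan (k + 1) : ℚ) * choose_add_three_term_recurrence n k +
    (2 * n + 3) * ((n + 1 + k).choose (2 * k) : ℚ) * hcat

theorem schroeder_recurrence (n : ℕ) :
    (n + 3) * schroeder (n + 2) = 3 * (2 * n + 3) * schroeder (n + 1) - n * schroeder n := by
  have first (m : ℕ) : schroederTerm m 0 = 1 := by simp [schroederTerm]
  have shift {m : ℕ} (h : m < n + 3) :
      schroeder m = ∑ k ∈ Finset.range (n + 2), schroederTerm m (k + 1) + 1 := by
    rw [schroeder_eq_sum_schroederTerm h, Finset.sum_range_succ', first]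
  have key := Finset.sum_congr rfl fun k (_ : k ∈ Finset.range (n + 2)) =>
    schroederTerm_recurrence n k
  simp only [Finset.sum_add_distrib, Finset.sum_sub_distrib, ← Finset.mul_sum,
    ← schroeder_eq_sum_schroederTerm (show n + 1 < n + 2 by lia)] at key
  have h₀ := shift (show n < n + 3 by lia)
  have h₁ := shift (show n + 1 < n + 3 by lia)
  have h₂ := shift (show n + 2 < n + 3 by lia)
  linear_combination (n + 3) * h₂ - (2 * n + 3) * h₁ + n * h₀ + key

end SchroederRecurrence

section Dickson

variable {R : Type*} [CommRing R] (a : R)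

lemma isMonicOfDegree_dickson [Nontrivial R] (k n : ℕ) :
    IsMonicOfDegree (dickson k a (n + 1)) (n + 1) := by
  induction n using Nat.twoStepInduction with
  | zero => simpa using isMonicOfDegree_X R
  | one =>
    have hC : (3 - k : R[X]) = C (3 - k : R) := by simp only [C_sub, map_ofNat, map_natCast]
    rw [dickson_two, hC, ← C_mul]
    exact (isMonicOfDegree_X_pow R 2).sub (by rw [natDegree_C]; exact two_pos)
  | more n ih₀ ih₁ =>
    rw [dickson_add_two, add_comm (n + 1 + 1)]
    refine ((isMonicOfDegree_X R).mul ih₁).sub ?_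
    exact (natDegree_C_mul_le a _).trans_lt (by rw [ih₀.natDegree_eq]; lia)

lemma dickson_one_add_two (n : ℕ) :
    dickson 1 a (n + 2) = dickson 2 a (n + 2) - C a * dickson 2 a n := by
  induction n using Nat.twoStepInduction with
  | zero =>
    simp only [zero_add, dickson_add_two, dickson_one, dickson_zero, Nat.cast_one, Nat.cast_ofNat]
    ring
  | one =>
    simp only [zero_add, dickson_add_two, dickson_one, dickson_zero, Nat.cast_one, Nat.cast_ofNat]
    ring
  | more n ih₀ ih₁ =>
    rw [dickson_add_two 1, ih₁, ih₀]
    linear_combination C a * dickson_add_two 2 a n - dickson_add_two 2 a (n + 2)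

lemma derivative_dickson_one (n : ℕ) :
    derivative (dickson 1 a (n + 1)) = (n + 1 : R[X]) * dickson 2 a n := by
  induction n using Nat.twoStepInduction with
  | zero =>
    simp only [zero_add, dickson_one, dickson_zero, derivative_X, Nat.cast_zero, Nat.cast_ofNat]
    ring
  | one =>
    simp only [dickson_add_two, zero_add, dickson_one, dickson_zero, derivative_sub, derivative_mul,
      derivative_X, derivative_C, derivative_one, derivative_ofNat, Nat.cast_one]
    ring
  | more n ih₀ ih₁ =>
    rw [dickson_add_two 1]
    simp only [derivative_sub, derivative_mul, derivative_X, derivative_C]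
    rw [ih₀, ih₁, dickson_one_add_two]
    push_cast
    linear_combination (-n - 2 : R[X]) * dickson_add_two 2 a n

lemma dickson_one_mul_dickson_two (m d : ℕ) :
    dickson 1 a m * dickson 2 a (m + d) =
      dickson 2 a (2 * m + d) + C a ^ m * dickson 2 a d := by
  induction m using Nat.twoStepInduction generalizing d with
  | zero => simp only [dickson_zero, Nat.cast_one, mul_zero, zero_add, pow_zero]; ring
  | one =>
    rw [add_comm 1 d, mul_one, add_comm 2 d, dickson_add_two 2 a d, dickson_one]
    ring
  | more m ih₀ ih₁ =>
    have h₀ := ih₀ (d + 2)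
    have h₁ := ih₁ (d + 1)
    have top := dickson_add_two 2 a (2 * m + d + 2)
    have bottom := dickson_add_two 2 a d
    rw [dickson_add_two 1]
    ring_nf at h₀ h₁ top bottom ⊢
    linear_combination X * h₁ - C a * h₀ - top - C a ^ (m + 1) * bottom

lemma dickson_two_mul_dickson_one (m d : ℕ) :
    dickson 2 a m * dickson 1 a (m + d + 2) =
      dickson 2 a (2 * m + d + 2) - C a ^ (m + 1) * dickson 2 a d := by
  induction m using Nat.twoStepInduction generalizing d with
  | zero =>
    rw [mul_zero, zero_add, dickson_one_add_two, dickson_zero, Nat.cast_ofNat]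
    ring
  | one =>
    have h := dickson_one_add_two a (d + 1)
    have top := dickson_add_two 2 a (d + 2)
    have bottom := dickson_add_two 2 a d
    rw [dickson_one]
    ring_nf at h top bottom ⊢
    linear_combination X * h - top + C a * bottom
  | more m ih₀ ih₁ =>
    have h₀ := ih₀ (d + 2)
    have h₁ := ih₁ (d + 1)
    have top := dickson_add_two 2 a (2 * m + d + 4)
    have bottom := dickson_add_two 2 a d
    rw [dickson_add_two 2 a m]
    ring_nf at h₀ h₁ top bottom ⊢
    linear_combination X * h₁ - C a * h₀ - top + C a ^ (m + 2) * bottom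

lemma wronskian_dickson_one (m d : ℕ) :
    wronskian (dickson 1 a (m + 1)) (dickson 1 a (m + 1 + d + 1)) =
      (d + 1 : R) • dickson 2 a (2 * (m + 1) + d) +
        ((2 * (m + 1) + d + 1) * a ^ (m + 1) : R) • dickson 2 a d := by
  have h := dickson_two_mul_dickson_one a m d
  rw [show m + d + 2 = m + 1 + d + 1 by ring, show 2 * m + d + 2 = 2 * (m + 1) + d by ring] at h
  simp only [wronskian, derivative_dickson_one, smul_eq_C_mul, map_add, map_mul, map_pow, map_one,
    map_natCast, map_ofNat]
  push_cast
  linear_combination (m + d + 2 : R[X]) * dickson_one_mul_dickson_two a (m + 1) d -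
    (m + 1 : R[X]) * h

lemma X_sq_sub_mul_dickson_two (n : ℕ) :
    (X ^ 2 - 4 * C a) * dickson 2 a n = dickson 1 a (n + 2) - C a * dickson 1 a n := by
  induction n using Nat.twoStepInduction with
  | zero =>
    simp only [zero_add, dickson_add_two, dickson_one, dickson_zero, Nat.cast_one, Nat.cast_ofNat]
    ring
  | one =>
    simp only [zero_add, dickson_add_two, dickson_one, dickson_zero, Nat.cast_one]
    ring
  | more n ih₀ ih₁ =>
    linear_combination X * ih₁ - C a * ih₀ + (X ^ 2 - 4 * C a) * dickson_add_two 2 a n -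
      dickson_add_two 1 a (n + 2) + C a * dickson_add_two 1 a n

lemma X_sq_sub_mul_derivative_dickson_two (n : ℕ) :
    (X ^ 2 - 4 * C a) * derivative (dickson 2 a (n + 1)) + 3 * X * dickson 2 a (n + 1) =
      (n + 4 : R) • dickson 2 a (n + 2) - (n * a : R) • dickson 2 a n := by
  have h := congrArg derivative (X_sq_sub_mul_dickson_two a (n + 1))
  have deriv_left := derivative_dickson_one a (n + 2)
  simp only [derivative_mul, derivative_sub, derivative_X_sq, derivative_C, derivative_ofNat,
    map_ofNat, derivative_dickson_one, deriv_left] at h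
  simp only [smul_eq_C_mul, map_add, map_mul, map_natCast, map_ofNat]
  push_cast at h
  linear_combination h - dickson_add_two 2 a n

end Dickson

section Functional

variable {R : Type*} [CommRing R]

/-- The linear functional on polynomials with moments `μ n`. -/
noncomputable def momentFunctional (μ : ℕ → R) : R[X] →ₗ[R] R :=
  (basisMonomials R).constr R μ

lemma momentFunctional_X_pow (μ : ℕ → R) (n : ℕ) : momentFunctional μ (X ^ n) = μ n := by
  rw [X_pow_eq_monomial]
  simpa [momentFunctional] using (basisMonomials R).constr_basis R μ n

lemma wronskian_X_pow (i j : ℕ) :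
    wronskian (X ^ i : R[X]) (X ^ j) = ((j : R) - i) • X ^ (i + j - 1) := by
  have mul_X_pow_pred (k n : ℕ) :
      (C (n : R) * X ^ (n - 1) * X ^ k : R[X]) = C (n : R) * X ^ (k + n - 1) := by
    cases n with
    | zero => simp
    | succ n => rw [mul_assoc, ← pow_add, ← add_assoc, Nat.add_sub_cancel, Nat.add_sub_cancel,
        add_comm n k]
  rw [smul_eq_C_mul, wronskian, derivative_X_pow, derivative_X_pow, mul_X_pow_pred,
    mul_comm (X ^ i), mul_X_pow_pred, add_comm j i, map_sub, sub_mul]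

lemma momentFunctional_wronskian_X_pow (s : ℕ → R) (i j : ℕ) :
    momentFunctional (fun n => s (n + 1)) (wronskian (X ^ i) (X ^ j)) =
      ((j : R) - i) * s (i + j) := by
  rw [wronskian_X_pow, map_smul, momentFunctional_X_pow, smul_eq_mul]
  obtain h | h := Nat.eq_zero_or_pos (i + j)
  · obtain ⟨rfl, rfl⟩ := Nat.add_eq_zero_iff.1 h
    simp
  · rw [Nat.sub_add_cancel h]

lemma derivative_taylor (r : R) (f : R[X]) :
    derivative (taylor r f) = taylor r (derivative f) := by
  simp [taylor_apply, derivative_comp]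

lemma wronskian_taylor (r : R) (f g : R[X]) :
    wronskian (taylor r f) (taylor r g) = taylor r (wronskian f g) := by
  simp only [wronskian, derivative_taylor, taylor_mul, map_sub]

end Functional

section SchroederFunctional

/-- The functional whose `n`-th moment is `schroeder (n + 1)`. -/
noncomputable def schroederFunctional : ℚ[X] →ₗ[ℚ] ℚ :=
  momentFunctional fun n => schroeder (n + 1)

lemma schroederFunctional_pearson (f : ℚ[X]) :
    schroederFunctional ((X ^ 2 - 6 * X + 1) * derivative f + 3 * (X - 3) * f) = 0 := by
  let pearson : ℚ[X] →ₗ[ℚ] ℚ[X] :=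
    LinearMap.mulLeft ℚ (X ^ 2 - 6 * X + 1) ∘ₗ derivative + LinearMap.mulLeft ℚ (3 * (X - 3))
  suffices schroederFunctional ∘ₗ pearson = 0 from LinearMap.congr_fun this f
  refine (basisMonomials ℚ).ext fun n => ?_
  have pearson_X_pow : pearson (X ^ n) =
      (n + 3 : ℚ) • X ^ (n + 1) - (3 * (2 * n + 3) : ℚ) • X ^ n + (n : ℚ) • X ^ (n - 1) := by
    simp only [pearson, LinearMap.add_apply, LinearMap.comp_apply, LinearMap.mulLeft_apply,
      derivative_X_pow, smul_eq_C_mul, map_add, map_mul, map_natCast, map_ofNat]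
    cases n with
    | zero =>
      simp only [Nat.cast_zero]
      ring
    | succ n =>
      rw [Nat.add_sub_cancel]
      ring
  have natCast_mul_pred : n * schroeder (n - 1 + 1) = n * schroeder n := by cases n <;> simp
  simp only [coe_basisMonomials, monomial_one_right_eq_X_pow, LinearMap.comp_apply, pearson_X_pow,
    map_add, map_sub, map_smul, schroederFunctional, momentFunctional_X_pow, smul_eq_mul,
    natCast_mul_pred, LinearMap.zero_apply]
  linear_combination schroeder_recurrence n

lemma schroederFunctional_taylor_pearson (f : ℚ[X]) :
    schroederFunctional (taylor (-3) ((X ^ 2 - 8) * derivative f + 3 * X * f)) = 0 := by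
  rw [← schroederFunctional_pearson (taylor (-3) f), derivative_taylor]
  congr 1
  simp only [taylor_apply, map_neg, map_ofNat, add_comp, mul_comp, sub_comp, pow_comp, X_comp,
    ofNat_comp]
  ring

lemma schroederFunctional_taylor_dickson_two (d : ℕ) :
    schroederFunctional (taylor (-3) (dickson 2 2 d)) = if d = 0 then 2 else 0 := by
  have recurrence (n : ℕ) : (n + 4) * schroederFunctional (taylor (-3) (dickson 2 2 (n + 2))) =
      n * 2 * schroederFunctional (taylor (-3) (dickson 2 2 n)) := by
    have h := schroederFunctional_taylor_pearson (dickson 2 2 (n + 1))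
    have : (8 : ℚ[X]) = 4 * C 2 := by rw [map_ofNat]; norm_num
    rw [this, X_sq_sub_mul_derivative_dickson_two] at h
    simpa only [map_sub, map_smul, smul_eq_mul, sub_eq_zero] using h
  induction d using Nat.twoStepInduction with
  | zero =>
    have moment_zero := momentFunctional_X_pow (fun n => schroeder (n + 1)) 0
    have dickson_eq : dickson 2 (2 : ℚ) 0 = 1 := by
      rw [dickson_zero]
      norm_num
    rw [dickson_eq, taylor_one, C_1, ← pow_zero X, schroederFunctional, moment_zero]
    norm_num [schroeder, Finset.sum_range_succ]
  | one =>
    have h := schroederFunctional_taylor_pearson 1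
    simp only [derivative_one, mul_zero, zero_add, mul_one, taylor_mul] at h
    rw [show (3 : ℚ[X]) = C 3 by rfl, taylor_C, ← smul_eq_C_mul, map_smul, smul_eq_zero] at h
    simpa using h
  | more d ih₀ _ =>
    refine mul_left_cancel₀ (by positivity : (d + 4 : ℚ) ≠ 0) ?_
    rw [recurrence, ih₀]
    cases d <;> simp

/-- The alternating form `(f, g) ↦ L (f g' - f' g)`, where `L` is `schroederFunctional`. -/
noncomputable def schroederForm : ℚ[X] →ₗ[ℚ] ℚ[X] →ₗ[ℚ] ℚ :=
  (wronskianBilin ℚ).compr₂ schroederFunctional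

lemma schroederForm_apply (f g : ℚ[X]) :
    schroederForm f g = schroederFunctional (wronskian f g) :=
  rfl

lemma isAlt_schroederForm : schroederForm.IsAlt := fun f => by
  rw [schroederForm_apply, wronskian_self_eq_zero, map_zero]

lemma schroederForm_X_pow (i j : ℕ) :
    schroederForm (X ^ i) (X ^ j) = ((j : ℚ) - i) * schroeder (i + j) :=
  momentFunctional_wronskian_X_pow schroeder i j

/-- Monic polynomials which are skew-orthogonal for `schroederForm`: up to the shift by `3`, the
Dickson polynomials of the first kind with parameter `2`, except that `dickson 1 2 0 = 2` is
replaced with `1`. -/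
noncomputable def skewOrthogonalPoly : ℕ → ℚ[X]
  | 0 => 1
  | n + 1 => taylor (-3) (dickson 1 2 (n + 1))

lemma isMonicOfDegree_skewOrthogonalPoly (n : ℕ) : IsMonicOfDegree (skewOrthogonalPoly n) n := by
  cases n with
  | zero => exact isMonicOfDegree_zero_iff.2 rfl
  | succ n =>
    simpa [skewOrthogonalPoly, taylor_apply] using
      (isMonicOfDegree_dickson (2 : ℚ) 1 n).comp one_ne_zero (isMonicOfDegree_X_add_one (-3))

lemma schroederForm_skewOrthogonalPoly (m d : ℕ) :
    schroederForm (skewOrthogonalPoly m) (skewOrthogonalPoly (m + d + 1)) =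
      if d = 0 then (2 * m + 1 : ℚ) * 2 ^ (m + 1) else 0 := by
  rw [schroederForm_apply]
  cases m with
  | zero =>
    have expansion : wronskian (skewOrthogonalPoly 0) (skewOrthogonalPoly (0 + d + 1)) =
        taylor (-3) ((d + 1 : ℚ) • dickson 2 2 d) := by
      simp [skewOrthogonalPoly, wronskian, derivative_taylor, derivative_dickson_one,
        smul_eq_C_mul]
    rw [expansion, map_smul, map_smul, schroederFunctional_taylor_dickson_two]
    split_ifs with hd <;> simp [hd]
  | succ m =>
    rw [skewOrthogonalPoly, skewOrthogonalPoly, wronskian_taylor, wronskian_dickson_one]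
    simp only [map_add, map_smul, schroederFunctional_taylor_dickson_two, smul_eq_mul]
    rw [if_neg (by lia)]
    split_ifs with hd
    · subst hd
      push_cast
      ring
    · ring

end SchroederFunctional

lemma prod_range_pow_odd {M : Type*} [CommMonoid M] (x : M) (n : ℕ) :
    ∏ k ∈ Finset.range n, x ^ (2 * k + 1) = x ^ (n ^ 2) := by
  induction n with
  | zero => simp
  | succ n ih => rw [Finset.prod_range_succ, ih, ← pow_add, add_sq, mul_one, one_pow, add_assoc]

/-- For every integer `n ≥ 0`, the Pfaffian of the `2n × 2n` skew-symmetric matrix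
with entries `(j-i)·S_{i+j-2}` (1-based; here 0-based, so the entry at `(i,j)` is
`(j-i)·S_{i+j}`) equals `2^{n²}·∏_{k=0}^{n-1} (4k+1)`. -/
theorem pfaffian_schroeder (n : ℕ) :
    pfaffian (N := n) (Matrix.of fun i j : Fin (2 * n) =>
        ((j.val : ℚ) - (i.val : ℚ)) * schroeder (i.val + j.val)) =
      2 ^ (n ^ 2) * ∏ k ∈ Finset.range n, (4 * (k : ℚ) + 1) := by
  calc pfaffian (N := n) (Matrix.of fun i j : Fin (2 * n) =>
        ((j.val : ℚ) - (i.val : ℚ)) * schroeder (i.val + j.val))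
      = pfaffian (Matrix.of fun i j : Fin (2 * n) => schroederForm (X ^ i.val) (X ^ j.val)) := by
        simp only [schroederForm_X_pow]
    _ = pfaffian (Matrix.of fun i j : Fin (2 * n) =>
          schroederForm (skewOrthogonalPoly i) (skewOrthogonalPoly j)) :=
        (pfaffian_gram_eq_of_monic isAlt_schroederForm isMonicOfDegree_skewOrthogonalPoly).symm
    _ = ∏ i : Fin n,
          schroederForm (skewOrthogonalPoly (2 * i)) (skewOrthogonalPoly (2 * i + 1)) := by
        rw [pfaffian_of_upper_band fun i j hij => ?_]
        · simp [val_blockEquiv]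
        · obtain ⟨d, hd⟩ := Nat.exists_eq_add_of_lt hij
          rw [Matrix.of_apply, show j.val = i + (d + 1) + 1 by lia,
            schroederForm_skewOrthogonalPoly, if_neg d.succ_ne_zero]
    _ = ∏ k ∈ Finset.range n, (2 ^ (2 * k + 1) * (4 * (k : ℚ) + 1)) := by
        rw [← Fin.prod_univ_eq_prod_range fun k => 2 ^ (2 * k + 1) * (4 * (k : ℚ) + 1)]
        refine Finset.prod_congr rfl fun i _ => ?_
        rw [schroederForm_skewOrthogonalPoly _ 0, if_pos rfl]
        push_cast
        ring
    _ = 2 ^ (n ^ 2) * ∏ k ∈ Finset.range n, (4 * (k : ℚ) + 1) := by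
        rw [Finset.prod_mul_distrib, prod_range_pow_odd]
end

section
/- For all nonnegative integers i and j, the following identity of rational numbers holds: Σ_{k=0}^{min(i,j)} C(i,k)·C(j,k)·F(i−k, k+1)·F(j−k, k+1) = M_{i+j}, where F(a,c) = Σ_{m=0}^{⌊a/2⌋} C(a,2m)·C(2m,m)/C(c+m,m). (This is the terminating hypergeometric identity Σ_{k≥0} C(i,k) C(j,k) ₂F₁((k−i+1)/2,(k−i)/2; k+2; 4) ₂F₁((k−j+1)/2,(k−j)/2; k+2; 4) = ₂F₁((1−i−j)/2,(−i−j)/2; 2; 4).) -/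
/-- The `n`-th Motzkin number `M_n = ∑_{k=0}^{n} (1/(k+1))·C(n,2k)·C(2k,k)`. -/
def motzkin (n : ℕ) : ℚ :=
  ∑ k ∈ Finset.range (n + 1), (1 / ((k : ℚ) + 1)) * (n.choose (2 * k)) * ((2 * k).choose k)

/-- `F(a,c) = ∑_{m=0}^{⌊a/2⌋} C(a,2m)·C(2m,m)/C(c+m,m)`, the terminating
hypergeometric series `₂F₁(-a/2, (1-a)/2; c+1; 4)`. -/
def F (a c : ℕ) : ℚ :=
  ∑ m ∈ Finset.range (a / 2 + 1),
    ((a.choose (2 * m) : ℚ) * ((2 * m).choose m)) / ((c + m).choose m : ℚ)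

/-!
Let `T(n, k)` count the lattice paths with `n` steps `+1`, `0`, `-1` that start at height `0`, end
at height `k` and never go below `0`. Its rows are the iterates `Lⁿ δ₀` of a symmetric tridiagonal
operator `L`, so moving `L` from one factor to the other gives
`∑ₖ T(i, k) T(j, k) = ⟨Lⁱ δ₀, Lʲ δ₀⟩ = ⟨δ₀, Lⁱ⁺ʲ δ₀⟩ = T(i + j, 0)`.
On the other hand `L = D + 1`, where `D` only allows the steps `±1`, so the binomial theorem
expresses `T(n, k)` through the ballot numbers that count the paths of `D`. That expansion is
`C(n, k) F(n - k, k + 1)`, which at `k = 0` is the Motzkin number `Mₙ`.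
-/

section JacobiOperator

variable {R : Type*} [CommSemiring R] (a b : ℕ → R)

/-- The Jacobi operator on sequences: the symmetric tridiagonal matrix with diagonal `b` and
off-diagonal `a`. The entry `a k` couples the indices `k` and `k + 1`. -/
def jacobiOp : Module.End R (ℕ → R) where
  toFun f
    | 0 => b 0 * f 0 + a 0 * f 1
    | k + 1 => a k * f k + b (k + 1) * f (k + 1) + a (k + 1) * f (k + 2)
  map_add' f g := by ext (_ | k) <;> simp only [Pi.add_apply] <;> ring
  map_smul' c f := by
    ext (_ | k) <;> simp only [Pi.smul_apply, smul_eq_mul, RingHom.id_apply] <;> ring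

lemma jacobiOp_apply_zero (f : ℕ → R) : jacobiOp a b f 0 = b 0 * f 0 + a 0 * f 1 := rfl

lemma jacobiOp_apply_succ (f : ℕ → R) (k : ℕ) :
    jacobiOp a b f (k + 1) = a k * f k + b (k + 1) * f (k + 1) + a (k + 1) * f (k + 2) := rfl

lemma jacobiOp_add_one : jacobiOp a (b + 1) = jacobiOp a b + 1 := by
  ext1 f
  ext (_ | k) <;>
    simp only [jacobiOp_apply_zero, jacobiOp_apply_succ, LinearMap.add_apply, Pi.add_apply,
      Module.End.one_apply, Pi.one_apply] <;> ring

-- Green's identity, with the boundary terms placed so that no subtraction occurs.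
lemma sum_range_jacobiOp_mul_add (f g : ℕ → R) (N : ℕ) :
    ∑ k ∈ Finset.range (N + 1), jacobiOp a b f k * g k + a N * f N * g (N + 1) =
      ∑ k ∈ Finset.range (N + 1), f k * jacobiOp a b g k + a N * f (N + 1) * g N := by
  induction N with
  | zero => simp only [zero_add, Finset.sum_range_one, jacobiOp_apply_zero]; ring
  | succ N ih =>
    rw [Finset.sum_range_succ, Finset.sum_range_succ _ (N + 1), jacobiOp_apply_succ,
      jacobiOp_apply_succ, add_mul, add_mul, ← add_assoc, ← add_assoc, ih]
    ring

lemma sum_range_jacobiOp_mul {f : ℕ → R} {N : ℕ} (hN : f N = 0) (hN' : f (N + 1) = 0)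
    (g : ℕ → R) :
    ∑ k ∈ Finset.range (N + 1), jacobiOp a b f k * g k =
      ∑ k ∈ Finset.range (N + 1), f k * jacobiOp a b g k := by
  simpa [hN, hN'] using sum_range_jacobiOp_mul_add a b f g N

/-- The total weight of the lattice paths with `n` steps `+1`, `0`, `-1` that start at height `0`,
end at height `k` and never go below `0`. A step between the heights `h` and `h + 1`, in either
direction, has weight `a h`, a level step at height `h` has weight `b h`, and the weight of a path
is the product over its steps. -/
def pathWeight (n k : ℕ) : R := (jacobiOp a b ^ n) (Pi.single 0 1) k

lemma pathWeight_zero : pathWeight a b 0 = Pi.single 0 1 := rfl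

lemma pathWeight_succ (n : ℕ) : pathWeight a b (n + 1) = jacobiOp a b (pathWeight a b n) := by
  unfold pathWeight
  rw [pow_succ', Module.End.mul_apply]

lemma pathWeight_eq_zero_of_lt {n k : ℕ} (h : n < k) : pathWeight a b n k = 0 := by
  induction n generalizing k with
  | zero => rw [pathWeight_zero, Pi.single_eq_of_ne h.ne']
  | succ n ih =>
    obtain ⟨k, rfl⟩ := Nat.exists_eq_add_one_of_ne_zero (Nat.ne_zero_of_lt h)
    rw [pathWeight_succ, jacobiOp_apply_succ, ih (by omega), ih (by omega), ih (by omega)]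
    ring

lemma sum_range_pathWeight_mul_of_le {i N : ℕ} (hi : i ≤ N) (j : ℕ) :
    ∑ k ∈ Finset.range (N + 1), pathWeight a b i k * pathWeight a b j k =
      pathWeight a b (i + j) 0 := by
  induction i generalizing j with
  | zero => simp [pathWeight_zero, Pi.single_apply]
  | succ i ih =>
    rw [pathWeight_succ, sum_range_jacobiOp_mul a b (pathWeight_eq_zero_of_lt a b hi)
      (pathWeight_eq_zero_of_lt a b (by omega)), ← pathWeight_succ, ih (by omega),
      Nat.add_right_comm i 1 j, Nat.add_assoc]

lemma sum_range_pathWeight_mul {i j N : ℕ} (h : min i j ≤ N) :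
    ∑ k ∈ Finset.range (N + 1), pathWeight a b i k * pathWeight a b j k =
      pathWeight a b (i + j) 0 := by
  rcases min_le_iff.mp h with hi | hj
  · exact sum_range_pathWeight_mul_of_le a b hi j
  · simpa only [mul_comm, add_comm] using sum_range_pathWeight_mul_of_le a b hj i

lemma pathWeight_add_one (n k : ℕ) :
    pathWeight a (b + 1) n k =
      ∑ p ∈ Finset.range (n + 1), (n.choose p : R) * pathWeight a b p k := by
  simp only [pathWeight, jacobiOp_add_one, (Commute.one_right (jacobiOp a b)).add_pow, one_pow,
    mul_one, LinearMap.sum_apply, Finset.sum_apply]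
  refine Finset.sum_congr rfl fun p _ => ?_
  rw [← Nat.cast_comm, ← nsmul_eq_mul, LinearMap.smul_apply, Pi.smul_apply, nsmul_eq_mul]

lemma pathWeight_eq_zero_of_odd {n k : ℕ} (h : Odd (n + k)) : pathWeight a 0 n k = 0 := by
  induction n generalizing k with
  | zero => rw [pathWeight_zero, Pi.single_eq_of_ne (by rintro rfl; simp at h)]
  | succ n ih =>
    rw [pathWeight_succ]
    cases k with
    | zero => simp [jacobiOp_apply_zero, ih (k := 1) h]
    | succ k =>
      simp [jacobiOp_apply_succ, ih (k := k) (by grind), ih (k := k + 2) (by grind)]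

lemma exists_eq_add_two_mul_of_pathWeight_ne_zero {n k : ℕ} (h : pathWeight a 0 n k ≠ 0) :
    ∃ m, n = k + 2 * m := by
  have hkn : k ≤ n := by
    by_contra! hnk
    exact h (pathWeight_eq_zero_of_lt a 0 hnk)
  have heven : Even (n + k) := by
    by_contra hodd
    exact h (pathWeight_eq_zero_of_odd a (Nat.not_even_iff_odd.mp hodd))
  obtain ⟨r, hr⟩ := heven
  exact ⟨r - k, by omega⟩

end JacobiOperator

/-- The ballot number `(k+1)/(k+m+1)·C(k+2m,m)`, which counts the paths with `k + m` steps `+1` and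
`m` steps `-1` that start at height `0` and never go below `0`. -/
def ballotNumber (k m : ℕ) : ℚ := (k + 1) / (k + m + 1) * (k + 2 * m).choose m

lemma ballotNumber_zero_right (k : ℕ) : ballotNumber k 0 = 1 := by
  simp [ballotNumber, div_self (Nat.cast_add_one_ne_zero (R := ℚ) k)]

lemma ballotNumber_zero_succ (m : ℕ) : ballotNumber 0 (m + 1) = ballotNumber 1 m := by
  have pascal : (0 + 2 * (m + 1)).choose (m + 1) = 2 * (1 + 2 * m).choose m := by
    rw [show 0 + 2 * (m + 1) = 2 * m + 1 + 1 by ring, Nat.choose_succ_succ', Nat.choose_symm_half,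
      add_comm 1]
    ring
  rw [ballotNumber, ballotNumber, pascal]
  push_cast
  field_simp
  ring

lemma ballotNumber_succ_succ (k m : ℕ) :
    ballotNumber (k + 1) (m + 1) = ballotNumber k (m + 1) + ballotNumber (k + 2) m := by
  have pascal : (k + 1 + 2 * (m + 1)).choose (m + 1) =
      (k + 2 + 2 * m).choose m + (k + 2 + 2 * m).choose (m + 1) := by
    rw [show k + 1 + 2 * (m + 1) = k + 2 + 2 * m + 1 by ring, Nat.choose_succ_succ']
  have ratio : ((k + 2 + 2 * m).choose (m + 1) : ℚ) * (m + 1) =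
      (k + 2 + 2 * m).choose m * (k + m + 2) := by
    have := Nat.choose_succ_right_eq (k + 2 + 2 * m) m
    rw [show k + 2 + 2 * m - m = k + m + 2 by omega] at this
    exact_mod_cast this
  rw [ballotNumber, ballotNumber, ballotNumber, pascal,
    show k + 2 * (m + 1) = k + 2 + 2 * m by ring]
  push_cast
  field_simp
  linear_combination (k + m + 3 : ℚ) * ratio

lemma ballotNumber_eq_choose_mul_choose_div (k m : ℕ) :
    ballotNumber k m =
      (k + 2 * m).choose k * (2 * m).choose m / (k + 1 + m).choose m := by
  rw [ballotNumber, Nat.cast_choose ℚ (by omega : m ≤ k + 2 * m),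
    Nat.cast_choose ℚ (by omega : k ≤ k + 2 * m), Nat.cast_choose ℚ (by omega : m ≤ 2 * m),
    Nat.cast_choose ℚ (by omega : m ≤ k + 1 + m), show k + 2 * m - m = k + m by omega,
    show k + 2 * m - k = 2 * m by omega, show 2 * m - m = m by omega,
    show k + 1 + m - m = k + 1 by omega, Nat.add_right_comm k 1 m, Nat.factorial_succ,
    Nat.factorial_succ]
  push_cast
  field_simp

lemma pathWeight_one_zero_eq_ballotNumber (k m : ℕ) :
    pathWeight 1 0 (k + 2 * m) k = ballotNumber k m := by
  induction m generalizing k with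
  | zero =>
    rw [ballotNumber_zero_right, mul_zero, add_zero]
    induction k with
    | zero => simp [pathWeight_zero]
    | succ k ih =>
      rw [pathWeight_succ, jacobiOp_apply_succ, ih,
        pathWeight_eq_zero_of_lt 1 0 (by omega : k < k + 2)]
      simp
  | succ m ihm =>
    induction k with
    | zero =>
      rw [show 0 + 2 * (m + 1) = 1 + 2 * m + 1 by ring, pathWeight_succ, jacobiOp_apply_zero, ihm,
        ballotNumber_zero_succ]
      simp
    | succ k ihk =>
      rw [Nat.add_right_comm, pathWeight_succ, jacobiOp_apply_succ, ihk,
        show k + 2 * (m + 1) = k + 2 + 2 * m by ring, ihm, ballotNumber_succ_succ]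
      simp

lemma pathWeight_one_one_eq_sum_ballotNumber {n k : ℕ} (h : k ≤ n) :
    pathWeight 1 1 n k =
      ∑ m ∈ Finset.range ((n - k) / 2 + 1), (n.choose (k + 2 * m) : ℚ) * ballotNumber k m := by
  have binomial := pathWeight_add_one (1 : ℕ → ℚ) 0 n k
  rw [zero_add] at binomial
  rw [binomial]
  refine (Finset.sum_of_injOn (fun m => k + 2 * m) (fun _ _ _ _ => by grind) (fun m hm => ?_)
    (fun p hpn hp => ?_) fun m _ => ?_).symm
  · simp only [Finset.coe_range, Set.mem_Iio] at hm ⊢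
    omega
  · by_contra hne
    obtain ⟨m, rfl⟩ := exists_eq_add_two_mul_of_pathWeight_ne_zero 1 (right_ne_zero_of_mul hne)
    rw [Finset.mem_range] at hpn
    exact hp ⟨m, by rw [Finset.coe_range, Set.mem_Iio]; omega, rfl⟩
  · rw [pathWeight_one_zero_eq_ballotNumber]

lemma choose_mul_F_eq_pathWeight (n k : ℕ) :
    (n.choose k : ℚ) * F (n - k) (k + 1) = pathWeight 1 1 n k := by
  rcases lt_or_ge n k with h | h
  · rw [Nat.choose_eq_zero_of_lt h, pathWeight_eq_zero_of_lt 1 1 h, Nat.cast_zero, zero_mul]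
  rw [pathWeight_one_one_eq_sum_ballotNumber h, F, Finset.mul_sum]
  refine Finset.sum_congr rfl fun m _ => ?_
  have trinomial : (n.choose (k + 2 * m) * (k + 2 * m).choose k : ℚ) =
      n.choose k * (n - k).choose (2 * m) := by
    have := Nat.choose_mul (n := n) (Nat.le_add_right k (2 * m))
    rw [Nat.add_sub_cancel_left] at this
    exact_mod_cast this
  rw [ballotNumber_eq_choose_mul_choose_div]
  linear_combination -((2 * m).choose m / (k + 1 + m).choose m : ℚ) * trinomial

lemma motzkin_eq_F_one (n : ℕ) : motzkin n = F n 1 := by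
  rw [motzkin, F]
  refine (Finset.sum_subset_zero_on_sdiff (Finset.range_subset_range.mpr (by omega))
    (fun m hm => ?_) fun m _ => ?_).symm
  · rw [Finset.mem_sdiff, Finset.mem_range, Finset.mem_range] at hm
    rw [Nat.choose_eq_zero_of_lt (by omega)]
    simp
  · rw [add_comm 1 m, Nat.choose_succ_self_right]
    push_cast
    ring

/-- The terminating hypergeometric identity
`∑_{k=0}^{min(i,j)} C(i,k)·C(j,k)·F(i-k,k+1)·F(j-k,k+1) = M_{i+j}`. -/
theorem hypergeometric_motzkin (i j : ℕ) :
    ∑ k ∈ Finset.range (min i j + 1),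
        (i.choose k : ℚ) * (j.choose k : ℚ) * F (i - k) (k + 1) * F (j - k) (k + 1) =
      motzkin (i + j) := by
  calc
    _ = ∑ k ∈ Finset.range (min i j + 1), (pathWeight 1 1 i k * pathWeight 1 1 j k : ℚ) := by
      refine Finset.sum_congr rfl fun k _ => ?_
      rw [← choose_mul_F_eq_pathWeight, ← choose_mul_F_eq_pathWeight]
      ring
    _ = pathWeight 1 1 (i + j) 0 := sum_range_pathWeight_mul 1 1 le_rfl
    _ = F (i + j) 1 := by simp [← choose_mul_F_eq_pathWeight]
    _ = motzkin (i + j) := (motzkin_eq_F_one _).symm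
end

section
/- Let n be a positive integer and let H(2n) = (h(i,j))_{1 ≤ i ≤ 2n, j ≥ 1}. Then Σ_λ det H(2n)_{I_{2n}(λ)} = ∏_{k=0}^{n−1} (4k+1), where the sum runs over all partitions λ of length at most 2n such that every part of λ is even and every part of the conjugate partition λ' is even, I_{2n}(λ) = {λ_{2n}+1, λ_{2n−1}+2, …, λ_1+2n}, and H(2n)_{I_{2n}(λ)} is the 2n×2n submatrix of H(2n) formed by the columns indexed by I_{2n}(λ). -/
/-- The entries (with 1-based indices `i, j ≥ 1`) of the matrix `H`:
`h(i,2k-1) = C(i-1,k-1)·F(i-k,k)` and `h(i,2k) = (i-1)·C(i-2,k-1)·F(i-k-1,k)`.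
(When the binomial prefactor vanishes the entry is `0`, so the truncated
natural subtraction in the first argument of `F` is harmless.) -/
def hEnt (i j : ℕ) : ℚ :=
  if j % 2 = 1 then
    ((i - 1).choose ((j + 1) / 2 - 1) : ℚ) * F (i - (j + 1) / 2) ((j + 1) / 2)
  else
    ((i : ℚ) - 1) * ((i - 2).choose (j / 2 - 1) : ℚ) * F (i - j / 2 - 1) (j / 2)

/-!
For a partition `λ` with even parts and even conjugate parts, `I(λ)` is a union of `n` column pairs
`{2l + 1, 2l + 2}`, and every such union arises once. Summing the minors of a matrix `M` over all
unions of `n` column pairs gives the Pfaffian of the symplectic Gram matrix `M J Mᵀ`; hence the sum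
depends only on this Gram matrix, and for a square matrix `N` it is just `det N`.

In terms of the trinomial coefficients `T(i, j) = [x ^ j] (x + 1 + x⁻¹) ^ i`, row `i` of `H` has
the entries `T(i - 1, l) - T(i - 1, l + 2)` and `(l + 1) T(i - 1, l + 1)` in column pair `l`. So
`H` is the unitriangular matrix `T` times a sparse matrix, and dropping the factor `T` changes no
minor. The Gram matrix of the sparse factor is tridiagonal, with entries `1, 3, 5, …` above the
diagonal. The same Gram matrix belongs to a square triangular matrix whose diagonal is
`1, 1, 5, 1, 9, 1, …`, and the determinant of the latter is the product sought.
-/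

section MinorSummation

open Equiv Finset Matrix
open scoped Nat

variable {n : ℕ} {ι κ R : Type*} [CommRing R]

theorem sum_eq_factorial_nsmul_sum_orderEmbedding {A : Type*} [AddCommMonoid A] [Fintype κ]
    [LinearOrder κ] (f : (Fin n → κ) → A) (hperm : ∀ a (π : Perm (Fin n)), f (a ∘ π) = f a)
    (hinj : ∀ a, ¬ Function.Injective a → f a = 0) :
    ∑ a, f a = n ! • ∑ a : Fin n ↪o κ, f a := by
  have sum_injective : ∑ a with Function.Injective a, f a = ∑ a, f a :=
    sum_filter_of_ne fun a _ ha => not_not.1 fun h => ha (hinj a h)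
  have sum_sorted : ∑ x : (Fin n ↪o κ) × Perm (Fin n), f x.1 =
      ∑ a with Function.Injective a, f a := by
    refine sum_bij (fun x _ => x.1 ∘ x.2) ?mem ?inj ?surj fun x _ => (hperm x.1 x.2).symm
    case mem => exact fun x _ => by simpa using x.1.injective.comp x.2.injective
    case inj =>
      rintro ⟨a, π⟩ _ ⟨b, ρ⟩ _ (h : a ∘ π = b ∘ ρ)
      have hab : a = b := OrderEmbedding.range_inj.1 <| by
        rw [← π.surjective.range_comp a, ← ρ.surjective.range_comp b, h]
      subst hab
      exact Prod.ext rfl (Equiv.ext fun i => a.injective (congrFun h i))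
    case surj =>
      intro a ha
      have ha : Function.Injective a := by simpa using ha
      refine ⟨(OrderEmbedding.ofStrictMono (a ∘ Tuple.sort a)
        ((Tuple.monotone_sort a).strictMono_of_injective (ha.comp (Tuple.sort a).injective)),
        (Tuple.sort a)⁻¹), mem_univ _, ?_⟩
      ext i
      simp
  rw [← sum_injective, ← sum_sorted, Fintype.sum_prod_type]
  simp [smul_sum, Fintype.card_perm]

theorem sum_sign_mul_prod_det_block {β : Type*} [Fintype ι] [DecidableEq ι] [Fintype β]
    [DecidableEq β] (A : Matrix (ι × β) (ι × β) R) :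
    ∑ σ : Perm (ι × β), (Perm.sign σ : R) * ∏ k, (of fun c d => A (σ (k, c)) (k, d)).det =
      ((Fintype.card β)! : R) ^ Fintype.card ι * A.det := by
  have expand (σ : Perm (ι × β)) : ∏ k, (of fun c d => A (σ (k, c)) (k, d)).det =
      ∑ ρ : ι → Perm β, (Perm.sign (prodCongrRight ρ) : R) *
        ∏ x, A ((σ * prodCongrRight ρ) x) x := by
    simp only [det_apply', prod_univ_sum, Fintype.piFinset_univ, of_apply, prod_mul_distrib,
      Perm.sign_prodCongrRight, Fintype.prod_prod_type, Perm.mul_apply, prodCongrRight_apply,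
      Units.coe_prod, Int.cast_prod]
  have reindex (ρ : ι → Perm β) : ∑ σ : Perm (ι × β), (Perm.sign σ : R) *
      ((Perm.sign (prodCongrRight ρ) : R) * ∏ x, A ((σ * prodCongrRight ρ) x) x) = A.det := by
    rw [det_apply', ← Equiv.sum_comp (Equiv.mulRight (prodCongrRight ρ)) fun σ =>
      (Perm.sign σ : R) * ∏ x, A (σ x) x]
    simp [mul_assoc]
  simp only [expand, mul_sum]
  rw [sum_comm, sum_congr rfl fun ρ _ => reindex ρ]
  simp [Fintype.card_perm]

/-- The minor of `M` formed by the column pairs `(a k, 0), (a k, 1)`. -/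
def pairMinor [Fintype ι] [DecidableEq ι] (M : Matrix (ι × Fin 2) (κ × Fin 2) R) (a : ι → κ) : R :=
  (M.submatrix id (Prod.map a id)).det

/-- The Gram matrix `M J Mᵀ` of the rows of `M` for the standard symplectic form `J`, in which the
columns `(l, 0)` and `(l, 1)` are dual to each other. -/
def symplecticGram {ρ : Type*} [Fintype κ] (M : Matrix ρ (κ × Fin 2) R) : Matrix ρ ρ R :=
  of fun r s => ∑ l, (M r (l, 0) * M s (l, 1) - M s (l, 0) * M r (l, 1))

/-- For an alternating matrix `A` this is `2 ^ n * n !` times the Pfaffian, `n` being the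
cardinality of `ι`; leaving out the division makes sense of it over any commutative ring. -/
def scaledPfaffian [Fintype ι] [DecidableEq ι] (A : Matrix (ι × Fin 2) (ι × Fin 2) R) : R :=
  ∑ σ : Perm (ι × Fin 2), (Perm.sign σ : R) * ∏ k, A (σ (k, 0)) (σ (k, 1))

section

variable [Fintype ι] [DecidableEq ι]

theorem pairMinor_comp_perm (M : Matrix (ι × Fin 2) (κ × Fin 2) R) (a : ι → κ) (π : Perm ι) :
    pairMinor M (a ∘ π) = pairMinor M a := by
  have h : pairMinor M (a ∘ π) =
      (Perm.sign (prodCongrLeft fun _ : Fin 2 => π) : R) * pairMinor M a :=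
    det_permute' (prodCongrLeft fun _ => π) (M.submatrix id (Prod.map a id))
  simpa [Perm.sign_prodCongrLeft] using h

theorem pairMinor_eq_zero_of_not_injective (M : Matrix (ι × Fin 2) (κ × Fin 2) R) {a : ι → κ}
    (ha : ¬ Function.Injective a) : pairMinor M a = 0 := by
  obtain ⟨i, j, hij, hne⟩ := Function.not_injective_iff.1 ha
  exact det_zero_of_column_eq (i := (i, 0)) (j := (j, 0)) (by simpa using hne) (by simp [hij])

theorem pairMinor_mul (P : Matrix (ι × Fin 2) (ι × Fin 2) R)
    (M : Matrix (ι × Fin 2) (κ × Fin 2) R) (a : ι → κ) :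
    pairMinor (P * M) a = P.det * pairMinor M a :=
  det_mul P (M.submatrix id (Prod.map a id))

theorem scaledPfaffian_symplecticGram [Fintype κ] (M : Matrix (ι × Fin 2) (κ × Fin 2) R) :
    scaledPfaffian (symplecticGram M) = 2 ^ Fintype.card ι * ∑ a : ι → κ, pairMinor M a := by
  have expand (σ : Perm (ι × Fin 2)) : ∏ k, symplecticGram M (σ (k, 0)) (σ (k, 1)) =
      ∑ a : ι → κ, ∏ k, (of fun c d => M (σ (k, c)) (a k, d)).det := by
    simp only [symplecticGram, of_apply, prod_univ_sum, Fintype.piFinset_univ, det_fin_two,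
      mul_comm (M (σ (_, 1)) (_, 0))]
  simp only [scaledPfaffian, expand, mul_sum]
  rw [sum_comm]
  refine sum_congr rfl fun a _ => ?_
  simpa [pairMinor] using sum_sign_mul_prod_det_block (M.submatrix id (Prod.map a id))

end

theorem scaledPfaffian_symplecticGram_eq_sum_orderEmbedding [Fintype κ] [LinearOrder κ]
    (M : Matrix (Fin n × Fin 2) (κ × Fin 2) R) :
    scaledPfaffian (symplecticGram M) = 2 ^ n * n ! * ∑ a : Fin n ↪o κ, pairMinor M a := by
  rw [scaledPfaffian_symplecticGram, Fintype.card_fin, mul_assoc, ← nsmul_eq_mul,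
    sum_eq_factorial_nsmul_sum_orderEmbedding _ (pairMinor_comp_perm M)
      fun _ => pairMinor_eq_zero_of_not_injective M]

theorem sum_pairMinor_self (M : Matrix (Fin n × Fin 2) (Fin n × Fin 2) R) :
    ∑ a : Fin n ↪o Fin n, pairMinor M a = M.det := by
  have eq_id (a : Fin n ↪o Fin n) : a = RelEmbedding.refl _ := OrderEmbedding.range_inj.1 <| by
    simp [(Finite.surjective_of_injective a.injective).range_eq]
  rw [Fintype.sum_eq_single _ fun a ha => absurd (eq_id a) ha]
  simp [pairMinor]

theorem sum_pairMinor_eq_det [IsDomain R] [CharZero R] [Fintype κ] [LinearOrder κ]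
    {M : Matrix (Fin n × Fin 2) (κ × Fin 2) R} {N : Matrix (Fin n × Fin 2) (Fin n × Fin 2) R}
    (h : symplecticGram M = symplecticGram N) : ∑ a : Fin n ↪o κ, pairMinor M a = N.det := by
  have hc : (2 ^ n * n ! : R) ≠ 0 :=
    mul_ne_zero (pow_ne_zero _ two_ne_zero) (Nat.cast_ne_zero.2 n.factorial_ne_zero)
  refine mul_left_cancel₀ hc ?_
  rw [← sum_pairMinor_self N, ← scaledPfaffian_symplecticGram_eq_sum_orderEmbedding,
    ← scaledPfaffian_symplecticGram_eq_sum_orderEmbedding, h]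

theorem finsum_pairMinor_eq_sum_subtype [LinearOrder κ]
    {M : Matrix (Fin n × Fin 2) (κ × Fin 2) R} {s : Finset κ}
    (hs : ∀ r, ∀ l ∉ s, M r (l, 0) = 0) :
    ∑ᶠ a : Fin n ↪o κ, pairMinor M a =
      ∑ a : Fin n ↪o s, pairMinor (M.submatrix id (Prod.map Subtype.val id)) a := by
  let incl (a : Fin n ↪o s) : Fin n ↪o κ := a.trans (OrderEmbedding.subtype (· ∈ s))
  have incl_injective : Function.Injective incl := fun a b h =>
    RelEmbedding.ext fun k => Subtype.ext (DFunLike.congr_fun h k)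
  have support_subset :
      Function.support (fun a : Fin n ↪o κ => pairMinor M a) ⊆ Set.range incl := by
    intro a ha
    have mem (k : Fin n) : a k ∈ s := by
      by_contra hk
      exact ha (det_eq_zero_of_column_eq_zero (k, 0) fun r => hs r _ hk)
    exact ⟨OrderEmbedding.ofStrictMono (fun k => ⟨a k, mem k⟩) fun _ _ h => a.strictMono h, rfl⟩
  rw [finsum_eq_sum_of_support_subset (s := univ.map ⟨incl, incl_injective⟩) _
    (by simpa using support_subset), sum_map]
  rfl

end MinorSummation

section Trinomial

open Finset

/-- The trinomial coefficient `[x ^ j] (x + 1 + x⁻¹) ^ i`; the index `m` of the sum counts the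
factors contributing `x⁻¹`. -/
def trinomial (i j : ℕ) : ℕ :=
  ∑ m ∈ range (i + 1), i.choose (j + 2 * m) * (j + 2 * m).choose m

theorem trinomial_eq_zero_of_lt {i j : ℕ} (h : i < j) : trinomial i j = 0 :=
  sum_eq_zero fun m _ => by rw [Nat.choose_eq_zero_of_lt (by lia), zero_mul]

theorem trinomial_self (i : ℕ) : trinomial i i = 1 := by
  rw [trinomial, sum_range_succ', sum_eq_zero fun m _ => by
    rw [Nat.choose_eq_zero_of_lt (by lia), zero_mul]]
  simp

theorem trinomial_eq_sum_range {i j N : ℕ} (hN : i < j + 2 * N) :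
    trinomial i j = ∑ m ∈ range N, i.choose (j + 2 * m) * (j + 2 * m).choose m := by
  have vanish {m : ℕ} (hm : i < j + 2 * m) : i.choose (j + 2 * m) * (j + 2 * m).choose m = 0 := by
    rw [Nat.choose_eq_zero_of_lt hm, zero_mul]
  rcases le_total N (i + 1) with h | h
  · refine (sum_subset (range_subset_range.2 h) fun m _ hm => vanish ?_).symm
    grind
  · refine sum_subset (range_subset_range.2 h) fun m _ hm => vanish ?_
    grind

/-- The ballot number `(l + 1) / (l + m + 1) * C(l + 2m, m)`. -/
def ballot (l m : ℕ) : ℚ :=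
  (l + 1) / (l + m + 1) * (l + 2 * m).choose m

theorem choose_mul_choose_div_choose (l m : ℕ) :
    ((l + 2 * m).choose l * (2 * m).choose m / (l + 1 + m).choose m : ℚ) = ballot l m := by
  rw [ballot, show l + 2 * m = m + (l + m) by ring, Nat.cast_add_choose,
    show m + (l + m) = l + (m + m) by ring, two_mul, Nat.cast_add_choose, Nat.cast_add_choose,
    add_comm (l + 1) m, Nat.cast_add_choose, ← add_assoc, show m + (l + 1) = l + m + 1 by ring,
    Nat.factorial_succ l, Nat.factorial_succ (l + m)]
  have factorial_ne_zero (k : ℕ) : (k.factorial : ℚ) ≠ 0 := Nat.cast_ne_zero.2 k.factorial_ne_zero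
  have := factorial_ne_zero l
  have := factorial_ne_zero m
  have := factorial_ne_zero (l + m)
  have := factorial_ne_zero (m + m)
  push_cast
  field_simp

theorem ballot_zero_right (l : ℕ) : ballot l 0 = 1 := by
  simp [ballot, (Nat.cast_add_one_pos l).ne']

theorem ballot_succ_right (l m : ℕ) :
    ballot l (m + 1) = (l + 2 * (m + 1)).choose (m + 1) - (l + 2 + 2 * m).choose m := by
  have h := congrArg (Nat.cast (R := ℚ)) (Nat.choose_succ_right_eq (l + 2 + 2 * m) m)
  rw [show l + 2 + 2 * m - m = l + m + 2 by lia] at h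
  rw [ballot, show l + 2 * (m + 1) = l + 2 + 2 * m by ring]
  push_cast at h ⊢
  field_simp
  linear_combination -h

theorem add_one_mul_choose_mul_ballot (i l m : ℕ) :
    ((i + 1) * (i.choose (l + 2 * m) * ballot l m) : ℚ) =
      (l + 1) * ((i + 1).choose (l + 1 + 2 * m) * (l + 1 + 2 * m).choose m) := by
  have h₁ := congrArg (Nat.cast (R := ℚ)) (Nat.add_one_mul_choose_eq i (l + 2 * m))
  have h₂ := congrArg (Nat.cast (R := ℚ)) (Nat.choose_mul_succ_eq (l + 2 * m) m)
  rw [show l + 2 * m + 1 - m = l + m + 1 by lia] at h₂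
  rw [ballot, show l + 1 + 2 * m = l + 2 * m + 1 by ring]
  push_cast at h₁ h₂
  field_simp
  linear_combination (l + 2 * m).choose m * h₁ + (i + 1).choose (l + 2 * m + 1) * h₂

theorem choose_mul_F (i l : ℕ) :
    i.choose l * F (i - l) (l + 1) =
      ∑ m ∈ range (i + 1), (i.choose (l + 2 * m) : ℚ) * ballot l m := by
  have summand (m : ℕ) : (i.choose l : ℚ) * ((i - l).choose (2 * m) * (2 * m).choose m /
      (l + 1 + m).choose m) = i.choose (l + 2 * m) * ballot l m := by
    have h := congrArg (Nat.cast (R := ℚ)) (Nat.choose_mul (n := i) (Nat.le_add_right l (2 * m)))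
    rw [Nat.add_sub_cancel_left] at h
    push_cast at h
    rw [← choose_mul_choose_div_choose, ← mul_div_assoc, ← mul_assoc, ← h, mul_div_assoc',
      mul_assoc]
  simp only [F, mul_sum, summand]
  refine sum_subset (range_subset_range.2 (by lia)) fun m _ hm => ?_
  rw [Nat.choose_eq_zero_of_lt (by grind), Nat.cast_zero, zero_mul]

theorem hEnt_odd (i l : ℕ) :
    hEnt (i + 1) (2 * l + 1) = trinomial i l - trinomial i (l + 2) := by
  have entry_eq : hEnt (i + 1) (2 * l + 1) = i.choose l * F (i - l) (l + 1) := by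
    rw [hEnt, if_pos (by lia), show (2 * l + 1 + 1) / 2 = l + 1 by lia]
    simp only [Nat.add_sub_cancel, Nat.add_sub_add_right]
  rw [entry_eq, choose_mul_F, sum_range_succ',
    trinomial_eq_sum_range (N := i + 1) (j := l) (by lia), sum_range_succ',
    trinomial_eq_sum_range (N := i) (by lia)]
  have shift (m : ℕ) : l + 2 * (m + 1) = l + 2 + 2 * m := by ring
  simp only [ballot_zero_right, ballot_succ_right, shift, mul_sub, sum_sub_distrib]
  push_cast
  simp only [add_zero, Nat.choose_zero_right, Nat.cast_one]
  ring

theorem hEnt_even (i l : ℕ) :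
    hEnt (i + 1) (2 * l + 2) = (l + 1) * trinomial i (l + 1) := by
  rw [hEnt, if_neg (by lia), show (2 * l + 2) / 2 = l + 1 by lia]
  rcases i with _ | i
  · simp [trinomial_eq_zero_of_lt]
  · rw [trinomial_eq_sum_range (N := i + 1) (by lia),
      show i + 1 + 1 - (l + 1) - 1 = i - l by lia, show i + 1 + 1 - 2 = i by lia,
      Nat.add_sub_cancel, mul_assoc, choose_mul_F]
    push_cast
    simp only [mul_sum, add_sub_cancel_right, add_one_mul_choose_mul_ballot]

end Trinomial

section Factorization

open Finset Matrix

variable {n : ℕ}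

theorem det_eq_prod_diag_of_lt {m α R : Type*} [Fintype m] [DecidableEq m] [CommRing R]
    [LinearOrder α] (e : m ≃ α) {A : Matrix m m R} (hA : ∀ r s, e r < e s → A r s = 0) :
    A.det = ∏ r, A r r := by
  let := LinearOrder.lift' e e.injective
  convert det_of_isLowerTriangular A (@hA)

/-- The order isomorphism `(k, c) ↦ 2k + c` from the lexicographic product; it turns the column
pair with label `k` into the columns `2k` and `2k + 1`. -/
def pairIndex (n : ℕ) : Fin n × Fin 2 ≃ Fin (2 * n) :=
  finProdFinEquiv.trans (finCongr (mul_comm n 2))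

theorem val_pairIndex (r : Fin n × Fin 2) : (pairIndex n r : ℕ) = 2 * r.1 + r.2 := by
  simp [pairIndex, add_comm]

/-- The matrix `H(2n)`, its zero-based row `i` being indexed by `pairIndex n` and its zero-based
column `2l + c` by `(l, c)`. -/
def hMatrix (n : ℕ) : Matrix (Fin n × Fin 2) (ℕ × Fin 2) ℚ :=
  of fun r c => hEnt (pairIndex n r + 1) (2 * c.1 + c.2 + 1)

/-- The unitriangular matrix of trinomial coefficients. -/
def trinomialMatrix (n : ℕ) : Matrix (Fin n × Fin 2) (Fin n × Fin 2) ℚ :=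
  of fun r s => (trinomial (pairIndex n r) (pairIndex n s) : ℚ)

/-- The cofactor of `trinomialMatrix` in `hMatrix`: writing `e i` for the unit vectors, its column
`(l, 0)` is `e l - e (l + 2)` and its column `(l, 1)` is `(l + 1) • e (l + 1)`. -/
def sparseFactor (n : ℕ) : Matrix (Fin n × Fin 2) (ℕ × Fin 2) ℚ :=
  of fun r c =>
    ![(if (pairIndex n r : ℕ) = c.1 then 1 else 0) - if (pairIndex n r : ℕ) = c.1 + 2 then 1 else 0,
      if (pairIndex n r : ℕ) = c.1 + 1 then (c.1 : ℚ) + 1 else 0] c.2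

theorem det_trinomialMatrix (n : ℕ) : (trinomialMatrix n).det = 1 := by
  rw [det_eq_prod_diag_of_lt (pairIndex n) fun r s h => by
    rw [trinomialMatrix, of_apply, trinomial_eq_zero_of_lt h, Nat.cast_zero]]
  simp [trinomialMatrix, trinomial_self]

theorem sum_trinomialMatrix_mul_ite (r : Fin n × Fin 2) (l : ℕ) (x : ℚ) :
    ∑ s, trinomialMatrix n r s * (if (pairIndex n s : ℕ) = l then x else 0) =
      trinomial (pairIndex n r) l * x := by
  by_cases hl : l < 2 * n
  · obtain ⟨t, ht⟩ : ∃ t, pairIndex n t = ⟨l, hl⟩ := (pairIndex n).surjective _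
    rw [Fintype.sum_eq_single t fun s hs => ?_]
    · simp [trinomialMatrix, ht]
    · rw [if_neg fun h => hs ((pairIndex n).injective (by rw [ht]; exact Fin.ext h)), mul_zero]
  · rw [trinomial_eq_zero_of_lt (by lia), Nat.cast_zero, zero_mul]
    exact sum_eq_zero fun s _ => by rw [if_neg (by lia), mul_zero]

theorem hMatrix_eq_mul (n : ℕ) : hMatrix n = trinomialMatrix n * sparseFactor n := by
  ext r ⟨l, c⟩
  rw [mul_apply]
  fin_cases c
  · simp [hMatrix, sparseFactor, hEnt_odd, mul_sub, sum_sub_distrib, sum_trinomialMatrix_mul_ite,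
      -mul_ite]
  · simp [hMatrix, sparseFactor, hEnt_even, sum_trinomialMatrix_mul_ite, -mul_ite,
      mul_comm (l + 1 : ℚ)]

/-- The antisymmetric tridiagonal matrix whose entry at `(i, i + 1)` is `2i + 1`, with rows and
columns indexed by `pairIndex n`. -/
def tridiagonal (n : ℕ) : Matrix (Fin n × Fin 2) (Fin n × Fin 2) ℚ :=
  of fun r s => ((pairIndex n r : ℚ) + pairIndex n s) *
    ((if (pairIndex n s : ℕ) = pairIndex n r + 1 then 1 else 0) -
      if (pairIndex n r : ℕ) = pairIndex n s + 1 then 1 else 0)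

/-- A square lower triangular matrix with the same symplectic Gram matrix as `sparseFactor`: its
column `(k, 0)` is `(4k + 1) • e (2k) - (4k + 3) • e (2k + 2)` and its column `(k, 1)` is
`e (2k + 1)`. -/
def triangularFactor (n : ℕ) : Matrix (Fin n × Fin 2) (Fin n × Fin 2) ℚ :=
  of fun r c =>
    ![(if (pairIndex n r : ℕ) = 2 * c.1 then 4 * (c.1 : ℚ) + 1 else 0) -
        if (pairIndex n r : ℕ) = 2 * c.1 + 2 then 4 * (c.1 : ℚ) + 3 else 0,
      if (pairIndex n r : ℕ) = 2 * c.1 + 1 then 1 else 0] c.2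

theorem det_triangularFactor (n : ℕ) :
    (triangularFactor n).det = ∏ k ∈ range n, (4 * (k : ℚ) + 1) := by
  rw [det_eq_prod_diag_of_lt (pairIndex n), Fintype.prod_prod_type,
    ← Fin.prod_univ_eq_prod_range (fun k => 4 * (k : ℚ) + 1)]
  · simp [triangularFactor, val_pairIndex]
  · rintro r ⟨k, c⟩ h
    rw [Fin.lt_def, val_pairIndex (k, c)] at h
    revert c
    simp only [triangularFactor, of_apply, Fin.forall_fin_two, cons_val_zero, cons_val_one,
      Fin.val_zero, Fin.val_one]
    grind

theorem sparseFactor_eq_zero_of_le (r : Fin n × Fin 2) {l : ℕ} (hl : 2 * n ≤ l) :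
    sparseFactor n r (l, 0) = 0 := by
  have := (pairIndex n r).isLt
  simp [sparseFactor, show (pairIndex n r : ℕ) ≠ l by lia,
    show (pairIndex n r : ℕ) ≠ l + 2 by lia]

theorem sum_sparseFactor_mul (r s : Fin n × Fin 2) :
    ∑ l ∈ range (2 * n), sparseFactor n r (l, 0) * sparseFactor n s (l, 1) =
      pairIndex n s * ((if (pairIndex n s : ℕ) = pairIndex n r + 1 then 1 else 0) -
        if (pairIndex n r : ℕ) = pairIndex n s + 1 then 1 else 0) := by
  have hs := (pairIndex n s).isLt
  simp only [sparseFactor, of_apply, cons_val_zero, cons_val_one]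
  generalize (pairIndex n s : ℕ) = j at *
  rcases j with _ | j
  · simp
  · have hj : j < 2 * n := Nat.lt_of_succ_lt hs
    simp only [Nat.add_right_cancel_iff, mul_ite, mul_zero, sum_ite_eq, mem_range, if_pos hj]
    simp [eq_comm (a := j), mul_comm]

theorem symplecticGram_sparseFactor (n : ℕ) :
    symplecticGram ((sparseFactor n).submatrix id (Prod.map (Subtype.val : range (2 * n) → ℕ) id)) =
      tridiagonal n := by
  ext r s
  simp only [symplecticGram, of_apply, submatrix_apply, id, Prod.map_apply, sum_sub_distrib]
  rw [sum_coe_sort (range (2 * n)) fun l => sparseFactor n r (l, 0) * sparseFactor n s (l, 1),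
    sum_coe_sort (range (2 * n)) fun l => sparseFactor n s (l, 0) * sparseFactor n r (l, 1),
    sum_sparseFactor_mul, sum_sparseFactor_mul, tridiagonal, of_apply]
  ring

theorem symplecticGram_triangularFactor (n : ℕ) :
    symplecticGram (triangularFactor n) = tridiagonal n := by
  have half_gram_zero (r : Fin n × Fin 2) (l : Fin n) :
      ∑ k, triangularFactor n r (k, 0) * triangularFactor n (l, 0) (k, 1) = 0 := by
    simp only [triangularFactor, of_apply, val_pairIndex]
    exact sum_eq_zero fun k _ => by simp [show 2 * (l : ℕ) ≠ 2 * k + 1 by lia]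
  have half_gram_one (r : Fin n × Fin 2) (l : Fin n) :
      ∑ k, triangularFactor n r (k, 0) * triangularFactor n (l, 1) (k, 1) =
        triangularFactor n r (l, 0) := by
    simp [triangularFactor, val_pairIndex, Fin.val_inj]
  have cast_eq_of_two_mul {k l : ℕ} (h : 2 * k = 2 * l + 2) : (k : ℚ) = l + 1 := by
    exact_mod_cast (by lia : k = l + 1)
  ext ⟨k, c⟩ ⟨l, d⟩
  revert c d
  simp only [symplecticGram, of_apply, sum_sub_distrib, Fin.forall_fin_two, half_gram_zero,
    half_gram_one]
  simp only [triangularFactor, tridiagonal, of_apply, val_pairIndex, cons_val_zero, Fin.val_zero,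
    Fin.val_one, add_zero, Nat.cast_add, Nat.cast_mul, Nat.cast_ofNat, Nat.cast_one]
  grind

end Factorization

section Partitions

open Finset Matrix

variable {n : ℕ}

theorem pairIndex_rev (k : Fin n) (c : Fin 2) :
    pairIndex n (k.rev, c.rev) = (pairIndex n (k, c)).rev := by
  ext
  simp only [val_pairIndex, Fin.val_rev]
  lia

theorem monotone_fst_pairIndex_symm : Monotone fun j => ((pairIndex n).symm j).1 := by
  intro i j hij
  obtain ⟨r, rfl⟩ := (pairIndex n).surjective i
  obtain ⟨s, rfl⟩ := (pairIndex n).surjective j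
  rw [Fin.le_def, val_pairIndex, val_pairIndex] at hij
  simp only [Equiv.symm_apply_apply, Fin.le_def]
  lia

theorem monotone_sub_val_of_strictMono {a : Fin n → ℕ} (ha : StrictMono a) :
    Monotone fun k => a k - k := by
  intro k l hkl
  have hcard : #(Ico k l) ≤ #(Ico (a k) (a l)) := card_le_card_of_injOn a
    (fun i hi => by simp_all [ha.le_iff_le, ha.lt_iff_lt]) ha.injective.injOn
  rw [Fin.card_Ico, Nat.card_Ico] at hcard
  have := ha.monotone hkl
  beta_reduce
  lia

theorem val_le_apply_of_strictMono {a : Fin n → ℕ} (ha : StrictMono a) (k : Fin n) :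
    (k : ℕ) ≤ a k := by
  have hcard : #(Iio k) ≤ #(range (a k)) :=
    card_le_card_of_injOn a (fun i hi => by simp_all [ha.lt_iff_lt]) ha.injective.injOn
  simpa using hcard

theorem forall_even_card_le_iff {f : Fin (2 * n) → ℕ} (hf : Antitone f) :
    (∀ i, 1 ≤ i → Even #{j | i ≤ f j}) ↔
      ∀ k, f (pairIndex n (k, 0)) = f (pairIndex n (k, 1)) := by
  refine ⟨fun heven k => le_antisymm ?_ (hf ?_), fun hpair i _ => ?_⟩
  · rcases Nat.eq_zero_or_pos (f (pairIndex n (k, 0))) with hzero | hpos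
    · exact hzero.trans_le (Nat.zero_le _)
    have lt_card_iff (j : Fin (2 * n)) :
        j < #{j | f (pairIndex n (k, 0)) ≤ f j} ↔ f (pairIndex n (k, 0)) ≤ f j :=
      Tuple.lt_card_ge_iff_apply_ge_of_antitone hf
    have hlt : 2 * (k : ℕ) < #{j | f (pairIndex n (k, 0)) ≤ f j} := by
      simpa only [val_pairIndex, Fin.val_zero, add_zero] using
        (lt_card_iff (pairIndex n (k, 0))).2 le_rfl
    have hsucc : 2 * (k : ℕ) + 1 < #{j | f (pairIndex n (k, 0)) ≤ f j} := by
      have := (heven _ hpos).two_dvd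
      lia
    exact (lt_card_iff _).1 (by simpa only [val_pairIndex, Fin.val_one] using hsucc)
  · simp [Fin.le_def, val_pairIndex]
  · rw [card_filter, ← (pairIndex n).sum_comp, Fintype.sum_prod_type]
    exact even_sum _ fun k _ => by rw [Fin.sum_univ_two, hpair]; exact Even.add_self _

/-- The partitions of length at most `2n`, listed by their parts in decreasing order, all of whose
parts and all of whose conjugate parts are even. -/
abbrev EvenPartition (n : ℕ) : Type :=
  {f : Fin (2 * n) → ℕ // Antitone f ∧ (∀ r, Even (f r)) ∧
    ∀ i : ℕ, 1 ≤ i → Even #{j | i ≤ f j}}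

theorem EvenPartition.apply_rev_pairIndex (p : EvenPartition n) (r : Fin n × Fin 2) :
    p.1 (pairIndex n r).rev = p.1 (pairIndex n (r.1, 0)).rev := by
  obtain ⟨k, c⟩ := r
  have := (forall_even_card_le_iff p.2.1).1 p.2.2.2 k.rev
  fin_cases c
  · rfl
  · simpa [← pairIndex_rev] using this

/-- The even partition `λ` whose column set `I(λ)` consists of the zero-based columns `2 a k` and
`2 a k + 1`. -/
def evenPartitionOfOrderEmbedding (a : Fin n ↪o ℕ) : EvenPartition n where
  val j := 2 * (a ((pairIndex n).symm j.rev).1 - ((pairIndex n).symm j.rev).1)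
  property := by
    have hanti : Antitone fun j : Fin (2 * n) =>
        2 * (a ((pairIndex n).symm j.rev).1 - ((pairIndex n).symm j.rev).1) := fun i j hij =>
      Nat.mul_le_mul_left 2 <| monotone_sub_val_of_strictMono a.strictMono <|
        monotone_fst_pairIndex_symm <| Fin.rev_le_rev.2 hij
    refine ⟨hanti, fun j => even_two_mul _, (forall_even_card_le_iff hanti).2 fun k => ?_⟩
    simp [← pairIndex_rev]

theorem evenPartitionOfOrderEmbedding_apply_rev (a : Fin n ↪o ℕ) (r : Fin n × Fin 2) :
    (evenPartitionOfOrderEmbedding a).1 (pairIndex n r).rev = 2 * (a r.1 - r.1) := by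
  simp [evenPartitionOfOrderEmbedding]

theorem evenPartitionOfOrderEmbedding_bijective (n : ℕ) :
    Function.Bijective (evenPartitionOfOrderEmbedding (n := n)) := by
  refine ⟨fun a b hab => ?_, fun p => ?_⟩
  · ext k
    have := congrArg (fun p : EvenPartition n => p.1 (pairIndex n (k, 0)).rev) hab
    simp only [evenPartitionOfOrderEmbedding_apply_rev] at this
    have := val_le_apply_of_strictMono a.strictMono k
    have := val_le_apply_of_strictMono b.strictMono k
    lia
  · have hmono : StrictMono fun k : Fin n => p.1 (pairIndex n (k, 0)).rev / 2 + k := by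
      intro k l hkl
      have hrev : (pairIndex n (l, 0)).rev ≤ (pairIndex n (k, 0)).rev := by
        rw [Fin.rev_le_rev, Fin.le_def, val_pairIndex, val_pairIndex]
        lia
      have := Nat.div_le_div_right (c := 2) (p.2.1 hrev)
      beta_reduce
      lia
    refine ⟨OrderEmbedding.ofStrictMono _ hmono, Subtype.ext (funext fun j => ?_)⟩
    obtain ⟨r, rfl⟩ := (Fin.rev_surjective.comp (pairIndex n).surjective) j
    rw [Function.comp_apply, evenPartitionOfOrderEmbedding_apply_rev, p.apply_rev_pairIndex]
    simp [Nat.two_mul_div_two_of_even (p.2.2.1 _)]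

theorem det_evenPartition_eq_pairMinor (a : Fin n ↪o ℕ) :
    (of fun r s : Fin (2 * n) =>
      hEnt (r + 1) ((evenPartitionOfOrderEmbedding a).1 s.rev + s + 1)).det =
      pairMinor (hMatrix n) a := by
  rw [← det_submatrix_equiv_self (pairIndex n), pairMinor]
  congr 1
  ext r s
  have := val_le_apply_of_strictMono a.strictMono s.1
  simp only [submatrix_apply, of_apply, hMatrix, id, Prod.map,
    evenPartitionOfOrderEmbedding_apply_rev, val_pairIndex]
  congr 1
  lia

end Partitions

/-- The minor summation: `∑_λ det H(2n)_{I_{2n}(λ)} = ∏_{k=0}^{n-1} (4k+1)`, the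
sum running over all partitions `λ` of length at most `2n` (encoded as antitone
functions `Fin (2n) → ℕ` listing the first `2n` parts) such that all parts of
`λ` and all parts of the conjugate partition `λ'` are even.  Here
`I_{2n}(λ) = {λ_{2n}+1, λ_{2n-1}+2, …, λ_1+2n}`, so the `s`-th column (0-based)
of the submatrix is column `λ_{2n-s} + s + 1` of `H`; only finitely many
summands are nonzero, and the sum is a `finsum`. -/
theorem sum_minors_eq (n : ℕ) (hn : 1 ≤ n) :
    ∑ᶠ p : {f : Fin (2 * n) → ℕ // Antitone f ∧ (∀ r, Even (f r)) ∧
        ∀ i : ℕ, 1 ≤ i →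
          Even ((Finset.univ.filter fun j : Fin (2 * n) => i ≤ f j).card)},
      (Matrix.of fun r s : Fin (2 * n) =>
        hEnt (r.val + 1) (p.1 s.rev + s.val + 1)).det =
    ∏ k ∈ Finset.range n, (4 * (k : ℚ) + 1) := by
  have gram_eq := (symplecticGram_sparseFactor n).trans (symplecticGram_triangularFactor n).symm
  calc
    _ = ∑ᶠ a : Fin n ↪o ℕ, pairMinor (hMatrix n) a :=
      (finsum_eq_of_bijective _ (evenPartitionOfOrderEmbedding_bijective n)
        fun a => (det_evenPartition_eq_pairMinor a).symm).symm
    _ = ∑ᶠ a : Fin n ↪o ℕ, pairMinor (sparseFactor n) a := by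
      simp only [hMatrix_eq_mul, pairMinor_mul, det_trinomialMatrix, one_mul]
    _ = ∑ a : Fin n ↪o Finset.range (2 * n), pairMinor ((sparseFactor n).submatrix id
          (Prod.map Subtype.val id)) a :=
      finsum_pairMinor_eq_sum_subtype fun r _ hl =>
        sparseFactor_eq_zero_of_le r (by simpa using hl)
    _ = (triangularFactor n).det := sum_pairMinor_eq_det gram_eq
    _ = ∏ k ∈ Finset.range n, (4 * (k : ℚ) + 1) := det_triangularFactor n
end

section
/- Let A = (a_{i,j})_{i,j ≥ 1} be the skew-symmetric array with a_{2k−1,2k} = 1 and a_{2k,2k−1} = −1 for every k ≥ 1 and all other entries 0. Let n ≥ 1 and let I = {i_1 < i_2 < … < i_{2n}} be a 2n-element set of positive integers, and let A^I_I denote the 2n×2n skew-symmetric matrix (a_{i_r, i_s})_{1 ≤ r,s ≤ 2n}. Then Pf(A^I_I) = 1 if I = I_{2n}(λ) for some partition λ of length at most 2n such that every part of λ and every part of the conjugate λ' is even, and Pf(A^I_I) = 0 otherwise; here I_{2n}(λ) = {λ_{2n}+1, λ_{2n−1}+2, …, λ_1+2n}. -/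
/-- The entries (with 1-based indices `i, j ≥ 1`) of the infinite skew-symmetric
array with `a_{2k-1,2k} = 1`, `a_{2k,2k-1} = -1` and all other entries `0`. -/
def aEnt (i j : ℕ) : ℚ :=
  if i % 2 = 1 ∧ j = i + 1 then 1
  else if j % 2 = 1 ∧ i = j + 1 then -1
  else 0

/-!
A Pfaffian whose entries above the first superdiagonal vanish has a single nonzero term, the one of
the matching `{1,2}, {3,4}, …`: a perfect matching all of whose blocks are pairs of consecutive
indices can only be this one. For `I = {i_1 < … < i_{2n}}` the entry of `A` at `i_r < i_s` vanishes
unless `i_s = i_r + 1`, which forces `s = r + 1`, so the Pfaffian is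
`∏ a_{i_{2k-1}, i_{2k}}`; it is `1` if every `i_{2k-1}` is odd with successor `i_{2k}`, and `0`
otherwise. For `I = I_{2n}(λ)` the equation `i_{2k} = i_{2k-1} + 1` says that the two parts of `λ`
involved are equal, and then `i_{2k-1}` is odd if and only if these parts are even. That the parts
of `λ` agree in consecutive pairs is in turn the evenness of the parts of `λ'`.
-/

section Pairs

variable {N : ℕ}

/-- The index `2i`, that is, the first index of the `i`-th block of the matching
`{0,1}, {2,3}, …` of `Fin (2 * N)`. -/
def pairFst (i : Fin N) : Fin (2 * N) := ⟨2 * i, by omega⟩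

/-- The index `2i + 1`, that is, the second index of the `i`-th block of the matching
`{0,1}, {2,3}, …` of `Fin (2 * N)`. -/
def pairSnd (i : Fin N) : Fin (2 * N) := ⟨2 * i + 1, by omega⟩

@[simp]
lemma val_pairFst (i : Fin N) : (pairFst i : ℕ) = 2 * i := rfl

@[simp]
lemma val_pairSnd (i : Fin N) : (pairSnd i : ℕ) = 2 * i + 1 := rfl

lemma pairFst_strictMono : StrictMono (pairFst (N := N)) := fun i j (hij : (i : ℕ) < j) =>
  show 2 * (i : ℕ) < 2 * j by omega

lemma pairSnd_strictMono : StrictMono (pairSnd (N := N)) := fun i j (hij : (i : ℕ) < j) =>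
  show 2 * (i : ℕ) + 1 < 2 * j + 1 by omega

lemma pairFst_covBy_pairSnd (i : Fin N) : pairFst i ⋖ pairSnd i := by
  simp [Fin.covBy_iff]

lemma eq_pairFst_or_eq_pairSnd (r : Fin (2 * N)) :
    (∃ i, r = pairFst i) ∨ ∃ i, r = pairSnd i := by
  rcases Nat.even_or_odd' r with ⟨k, hk | hk⟩
  · exact .inl ⟨⟨k, by omega⟩, Fin.ext hk⟩
  · exact .inr ⟨⟨k, by omega⟩, Fin.ext hk⟩

lemma rev_pairFst (i : Fin N) : (pairFst i).rev = pairSnd i.rev := by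
  ext
  simp only [Fin.val_rev, val_pairFst, val_pairSnd]
  omega

lemma rev_pairSnd (i : Fin N) : (pairSnd i).rev = pairFst i.rev := by
  rw [Fin.rev_eq_iff, rev_pairFst, Fin.rev_rev]

lemma bijective_sumElim_pairFst_pairSnd :
    Function.Bijective (Sum.elim (pairFst (N := N)) pairSnd) := by
  constructor
  · refine pairFst_strictMono.injective.sumElim pairSnd_strictMono.injective fun i j hij => ?_
    have hval : 2 * (i : ℕ) = 2 * j + 1 := congrArg Fin.val hij
    omega
  · intro r
    rcases eq_pairFst_or_eq_pairSnd r with ⟨i, rfl⟩ | ⟨i, rfl⟩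
    exacts [⟨.inl i, rfl⟩, ⟨.inr i, rfl⟩]

lemma sum_univ_eq_sum_pairFst_add_sum_pairSnd {M : Type*} [AddCommMonoid M]
    (f : Fin (2 * N) → M) : ∑ r, f r = ∑ i, f (pairFst i) + ∑ i, f (pairSnd i) := by
  rw [← bijective_sumElim_pairFst_pairSnd.sum_comp, Fintype.sum_sum_type]
  simp only [Sum.elim_inl, Sum.elim_inr]

lemma even_card_filter_of_pairFst_iff_pairSnd {P : Fin (2 * N) → Prop} [DecidablePred P]
    (hP : ∀ i, P (pairFst i) ↔ P (pairSnd i)) : Even (Finset.univ.filter P).card := by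
  simp only [Finset.card_filter, sum_univ_eq_sum_pairFst_add_sum_pairSnd, hP]
  exact Even.add_self _

lemma apply_pairFst_eq_apply_pairSnd_of_even_card {α : Type*} [PartialOrder α] [DecidableLE α]
    {p : Fin (2 * N) → α} (hp : Antitone p) {i : Fin N}
    (heven : Even (Finset.univ.filter fun j => p (pairFst i) ≤ p j).card) :
    p (pairFst i) = p (pairSnd i) := by
  by_contra hne
  have hlt : p (pairSnd i) < p (pairFst i) := (hp (pairFst_covBy_pairSnd i).le).lt_of_ne' hne
  have hIic : (Finset.univ.filter fun j => p (pairFst i) ≤ p j) = Finset.Iic (pairFst i) := by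
    ext j
    simp only [Finset.mem_filter, Finset.mem_univ, true_and, Finset.mem_Iic]
    refine ⟨fun hj => not_lt.1 fun hij => ?_, fun hj => hp hj⟩
    exact (hj.trans (hp ((pairFst_covBy_pairSnd i).ge_of_gt hij))).not_gt hlt
  rw [hIic, Fin.card_Iic, val_pairFst] at heven
  exact Nat.not_even_two_mul_add_one _ heven

lemma forall_even_card_filter_le_iff {p : Fin (2 * N) → ℕ} (hp : Antitone p) :
    (∀ i, 1 ≤ i → Even (Finset.univ.filter fun j => i ≤ p j).card) ↔
      ∀ k, p (pairFst k) = p (pairSnd k) := by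
  refine ⟨fun h k => ?_, fun h i _ => even_card_filter_of_pairFst_iff_pairSnd fun k => by rw [h k]⟩
  rcases (p (pairFst k)).eq_zero_or_pos with hzero | hpos
  · have hle := hp (pairFst_covBy_pairSnd k).le
    omega
  · exact apply_pairFst_eq_apply_pairSnd_of_even_card hp (h _ hpos)

end Pairs

section Pfaffian

variable {N : ℕ}

lemma strictMono_of_covBy_of_strictMono_pairFst {α : Type*} [LinearOrder α]
    {f : Fin (2 * N) → α} (hf : Function.Injective f)
    (hcov : ∀ i, f (pairFst i) ⋖ f (pairSnd i)) (hfst : StrictMono fun i => f (pairFst i)) :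
    StrictMono f := by
  refine (strictMono_iff_forall_covBy f).2 fun r s hrs => ?_
  have hsucc : (s : ℕ) = r + 1 := (Nat.covBy_iff_add_one_eq.1 (Fin.covBy_iff.1 hrs)).symm
  rcases eq_pairFst_or_eq_pairSnd r with ⟨i, rfl⟩ | ⟨i, rfl⟩
  · obtain rfl : s = pairSnd i := Fin.ext hsucc
    exact (hcov i).lt
  · obtain ⟨j, rfl⟩ : ∃ j, s = pairFst j :=
      (eq_pairFst_or_eq_pairSnd s).resolve_right fun ⟨j, hj⟩ => by
        rw [hj, val_pairSnd, val_pairSnd] at hsucc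
        omega
    have hij : i < j := by
      rw [val_pairFst, val_pairSnd] at hsucc
      omega
    exact ((hcov i).ge_of_gt (hfst hij)).lt_of_ne (hf.ne hrs.ne)

lemma perm_eq_one_of_strictMono {α : Type*} [LinearOrder α] [WellFoundedLT α] [WellFoundedGT α]
    {σ : Equiv.Perm α} (hσ : StrictMono σ) : σ = 1 :=
  Equiv.ext fun _ => le_antisymm hσ.apply_le hσ.le_apply

lemma pfaffian_eq_sum_pairFst_pairSnd {R : Type*} [CommRing R]
    (A : Matrix (Fin (2 * N)) (Fin (2 * N)) R) :
    pfaffian A = ∑ σ : Equiv.Perm (Fin (2 * N)) with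
        (∀ i, σ (pairFst i) < σ (pairSnd i)) ∧ ∀ i j, i < j → σ (pairFst i) < σ (pairFst j),
      (Equiv.Perm.sign σ : ℤ) • ∏ i, A (σ (pairFst i)) (σ (pairSnd i)) :=
  rfl

theorem pfaffian_eq_prod_of_forall_not_covBy {R : Type*} [CommRing R]
    (A : Matrix (Fin (2 * N)) (Fin (2 * N)) R)
    (hA : ∀ r s, r < s → ¬ r ⋖ s → A r s = 0) :
    pfaffian A = ∏ i, A (pairFst i) (pairSnd i) := by
  rw [pfaffian_eq_sum_pairFst_pairSnd, Finset.sum_eq_single 1]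
  · simp only [Equiv.Perm.sign_one, Units.val_one, one_smul, Equiv.Perm.one_apply]
  · intro σ hσ hne
    obtain ⟨hpair, hfst⟩ := (Finset.mem_filter.1 hσ).2
    obtain ⟨i, hi⟩ : ∃ i, ¬ σ (pairFst i) ⋖ σ (pairSnd i) := by
      by_contra! hcov
      exact hne (perm_eq_one_of_strictMono
        (strictMono_of_covBy_of_strictMono_pairFst σ.injective hcov hfst))
    rw [Finset.prod_eq_zero (Finset.mem_univ i) (hA _ _ (hpair i) hi), smul_zero]
  · intro hone
    exact absurd (Finset.mem_filter.2 ⟨Finset.mem_univ _, fun i => (pairFst_covBy_pairSnd i).lt,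
      fun _ _ hij => pairFst_strictMono hij⟩) hone

/-- The set of positive integers enumerated increasingly by `e` is a union of blocks
`{2k-1, 2k}`; the case in which the Pfaffian of the corresponding submatrix of `aEnt` is `1`. -/
def IsBlockUnion (e : Fin (2 * N) → ℕ) : Prop :=
  ∀ i, Odd (e (pairFst i)) ∧ e (pairSnd i) = e (pairFst i) + 1

lemma aEnt_of_lt {i j : ℕ} (hij : i < j) : aEnt i j = if Odd i ∧ j = i + 1 then 1 else 0 := by
  have hnot : ¬ (j % 2 = 1 ∧ i = j + 1) := by omega
  simp only [aEnt, if_neg hnot, Nat.odd_iff]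

theorem pfaffian_aEnt_eq_ite {e : Fin (2 * N) → ℕ} [Decidable (IsBlockUnion e)]
    (he : StrictMono e) :
    pfaffian (Matrix.of fun r s => aEnt (e r) (e s)) = if IsBlockUnion e then 1 else 0 := by
  rw [pfaffian_eq_prod_of_forall_not_covBy]
  · simp only [Matrix.of_apply, aEnt_of_lt (he (pairFst_covBy_pairSnd _).lt), Fintype.prod_boole]
    congr
  · intro r s hrs hcov
    rw [Matrix.of_apply, aEnt_of_lt (he hrs), if_neg]
    rintro ⟨-, hsucc⟩
    have himage : e r ⋖ e s := Nat.covBy_iff_add_one_eq.2 hsucc.symm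
    exact hcov (himage.of_image (OrderEmbedding.ofStrictMono e he))

end Pfaffian

section ShiftedParts

variable {m : ℕ}

/-- The increasing enumeration of the set `I_m(λ) = {λ_m + 1, λ_{m-1} + 2, …, λ_1 + m}`, for
`λ` encoded by `p` through `λ_{j+1} = p j`. -/
def shiftedParts (p : Fin m → ℕ) (s : Fin m) : ℕ := p s.rev + s + 1

lemma add_val_le_add_val_of_strictMono {e : Fin m → ℕ} (he : StrictMono e) {r s : Fin m}
    (hrs : r ≤ s) : e r + s ≤ e s + r := by
  have hmono : Monotone fun t => (e t : ℤ) - t := by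
    refine (monotone_iff_forall_covBy _).2 fun a b hab => ?_
    have hval := Nat.covBy_iff_add_one_eq.1 (Fin.covBy_iff.1 hab)
    have hlt := he hab.lt
    omega
  have hle : (e r : ℤ) - r ≤ e s - s := hmono hrs
  omega

lemma exists_antitone_shiftedParts_eq {e : Fin m → ℕ} (he : StrictMono e)
    (hpos : ∀ r, 1 ≤ e r) : ∃ p, Antitone p ∧ shiftedParts p = e := by
  refine ⟨fun j => e j.rev - (j.rev + 1), fun a b hab => ?_, funext fun s => ?_⟩
  · have hrev := add_val_le_add_val_of_strictMono he (Fin.rev_le_rev.2 hab)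
    dsimp only
    omega
  · have hfirst := add_val_le_add_val_of_strictMono he (r := ⟨0, s.pos⟩) (Nat.zero_le s)
    have hfirst_pos := hpos ⟨0, s.pos⟩
    simp only [shiftedParts, Fin.rev_rev] at hfirst ⊢
    omega

lemma isBlockUnion_shiftedParts_iff {N : ℕ} {p : Fin (2 * N) → ℕ} :
    IsBlockUnion (shiftedParts p) ↔
      (∀ r, Even (p r)) ∧ ∀ i, p (pairFst i) = p (pairSnd i) := by
  have hblock (i : Fin N) :
      (Odd (shiftedParts p (pairFst i)) ∧
        shiftedParts p (pairSnd i) = shiftedParts p (pairFst i) + 1) ↔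
      Even (p (pairSnd i.rev)) ∧ p (pairFst i.rev) = p (pairSnd i.rev) := by
    simp only [shiftedParts, rev_pairFst, rev_pairSnd, val_pairFst, val_pairSnd, Nat.odd_iff,
      Nat.even_iff]
    omega
  rw [IsBlockUnion, forall_congr' hblock,
    ← Fin.rev_surjective.forall
      (p := fun i => Even (p (pairSnd i)) ∧ p (pairFst i) = p (pairSnd i)),
    forall_and, and_congr_left_iff]
  refine fun hpair => ⟨fun hsnd r => ?_, fun heven i => heven _⟩
  rcases eq_pairFst_or_eq_pairSnd r with ⟨i, rfl⟩ | ⟨i, rfl⟩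
  exacts [hpair i ▸ hsnd i, hsnd i]

end ShiftedParts

/-- For a `2n`-element set `I = {i_1 < … < i_{2n}}` of positive integers (encoded
by the strictly monotone enumeration `e : Fin (2n) → ℕ`), the Pfaffian of
`A^I_I = (a_{i_r, i_s})` equals `1` if `I = I_{2n}(λ)` for some partition `λ` of
length at most `2n` (encoded as an antitone function `Fin (2n) → ℕ`) all of
whose parts and all of whose conjugate parts are even, i.e., if
`e s = λ_{2n-s} + s + 1` (0-based `s`) for such a `λ`; and it equals `0`
otherwise. -/
theorem pfaffian_sub_aEnt (n : ℕ) (hn : 1 ≤ n) (e : Fin (2 * n) → ℕ)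
    (hmono : StrictMono e) (hpos : ∀ r, 1 ≤ e r) :
    ((∃ p : Fin (2 * n) → ℕ, Antitone p ∧ (∀ r, Even (p r)) ∧
        (∀ i : ℕ, 1 ≤ i →
          Even ((Finset.univ.filter fun j : Fin (2 * n) => i ≤ p j).card)) ∧
        (∀ s : Fin (2 * n), e s = p s.rev + s.val + 1)) →
      pfaffian (N := n) (Matrix.of fun r s : Fin (2 * n) => aEnt (e r) (e s)) = 1) ∧
    ((¬ ∃ p : Fin (2 * n) → ℕ, Antitone p ∧ (∀ r, Even (p r)) ∧
        (∀ i : ℕ, 1 ≤ i →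
          Even ((Finset.univ.filter fun j : Fin (2 * n) => i ≤ p j).card)) ∧
        (∀ s : Fin (2 * n), e s = p s.rev + s.val + 1)) →
      pfaffian (N := n) (Matrix.of fun r s : Fin (2 * n) => aEnt (e r) (e s)) = 0) := by
  have hpartition : (∃ p : Fin (2 * n) → ℕ, Antitone p ∧ (∀ r, Even (p r)) ∧
      (∀ i : ℕ, 1 ≤ i → Even ((Finset.univ.filter fun j : Fin (2 * n) => i ≤ p j).card)) ∧
      (∀ s : Fin (2 * n), e s = p s.rev + s.val + 1)) ↔ IsBlockUnion e := by
    constructor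
    · rintro ⟨p, hp, hrow, hcol, he⟩
      obtain rfl : e = shiftedParts p := funext he
      exact isBlockUnion_shiftedParts_iff.2 ⟨hrow, (forall_even_card_filter_le_iff hp).1 hcol⟩
    · intro hblock
      obtain ⟨p, hp, rfl⟩ := exists_antitone_shiftedParts_eq hmono hpos
      obtain ⟨hrow, hpair⟩ := isBlockUnion_shiftedParts_iff.1 hblock
      exact ⟨p, hp, hrow, (forall_even_card_filter_le_iff hp).2 hpair, fun _ => rfl⟩
  classical
  rw [hpartition, pfaffian_aEnt_eq_ite hmono]
  exact ⟨fun h => if_pos h, fun h => if_neg h⟩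
end

section
/- For all integers i ≥ 1 and k ≥ 1, h(i,2k) = k·c_{i+k−1}, where c_{i+k−1} is the coefficient of x^{i+k−1} in the polynomial (1+x+x²)^{i−1}. That is, (i−1)·C(i−2,k−1)·F(i−k−1,k) = k·[x^{i+k−1}](1+x+x²)^{i−1}. -/
/-!
Write `1 + x + x² = 1 + x (1 + x)`. Taking the `1` from exactly `m` of the `n` factors leaves
`x ^ (n - m) (1 + x) ^ (n - m)`, so that
`[x ^ (n + k)] (1 + x + x²) ^ n = ∑ m, C(n, m) C(n - m, k + m)`.
Multiplied by `C(k + m, m)`, the `m`-th summand becomes the multinomial coefficient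
`n! / (k! m! m! (n - k - 2 m)!) = C(n, k) C(n - k, 2 m) C(2 m, m)`, so the sum is
`C(n, k) F(n - k, k)`. With `n = i - 1`, the absorption identity `k C(n, k) = n C(n - 1, k - 1)`
turns `k` times this coefficient into `h(i, 2 k)`.
-/

theorem mul_choose_sub_one_sub_one (n : ℕ) {k : ℕ} (hk : k ≠ 0) :
    n * (n - 1).choose (k - 1) = k * n.choose k := by
  obtain ⟨l, rfl⟩ := Nat.exists_eq_succ_of_ne_zero hk
  cases n with
  | zero => simp
  | succ n => exact (Nat.add_one_mul_choose_eq n l).trans (mul_comm _ _)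

theorem choose_mul_choose_sub_comm (n k m : ℕ) :
    n.choose k * (n - k).choose m = n.choose m * (n - m).choose k :=
  calc n.choose k * (n - k).choose m
      = n.choose (k + m) * (k + m).choose k := by
        rw [Nat.choose_mul (Nat.le_add_right k m), Nat.add_sub_cancel_left]
    _ = n.choose (k + m) * (k + m).choose m := by rw [Nat.choose_symm_add]
    _ = n.choose m * (n - m).choose k := by
        rw [Nat.choose_mul (Nat.le_add_left m k), Nat.add_sub_cancel_right]

theorem choose_mul_choose_two_mul_mul_choose (n k m : ℕ) :
    n.choose k * ((n - k).choose (2 * m) * (2 * m).choose m) =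
      n.choose m * (n - m).choose (k + m) * (k + m).choose m :=
  calc n.choose k * ((n - k).choose (2 * m) * (2 * m).choose m)
      = n.choose k * (n - k).choose m * (n - k - m).choose m := by
        rw [Nat.choose_mul (Nat.le_mul_of_pos_left m two_pos), two_mul, Nat.add_sub_cancel_left,
          mul_assoc]
    _ = n.choose m * ((n - m).choose k * (n - m - k).choose m) := by
        rw [choose_mul_choose_sub_comm, Nat.sub_right_comm, mul_assoc]
    _ = n.choose m * ((n - m).choose (k + m) * (k + m).choose k) := by
        rw [Nat.choose_mul (Nat.le_add_right k m), Nat.add_sub_cancel_left]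
    _ = n.choose m * (n - m).choose (k + m) * (k + m).choose m := by
        rw [Nat.choose_symm_add, mul_assoc]

theorem F_eq_sum_range {a N : ℕ} (c : ℕ) (hN : a / 2 < N) :
    F a c = ∑ m ∈ Finset.range N,
      ((a.choose (2 * m) : ℚ) * (2 * m).choose m) / (c + m).choose m := by
  refine Finset.sum_subset (Finset.range_subset_range.mpr hN) fun m _ hm => ?_
  have a_lt : a < 2 * m := by grind
  rw [Nat.choose_eq_zero_of_lt a_lt, Nat.cast_zero, zero_mul, zero_div]

theorem choose_mul_F_s17 (n k : ℕ) :
    (n.choose k : ℚ) * F (n - k) k =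
      ∑ m ∈ Finset.range (n + 1), (n.choose m * (n - m).choose (k + m) : ℚ) := by
  rw [F_eq_sum_range k (show (n - k) / 2 < n + 1 by omega), Finset.mul_sum]
  refine Finset.sum_congr rfl fun m _ => ?_
  have choose_ne_zero : ((k + m).choose m : ℚ) ≠ 0 :=
    Nat.cast_ne_zero.mpr (Nat.choose_ne_zero (Nat.le_add_left m k))
  rw [← mul_div_assoc, div_eq_iff choose_ne_zero]
  exact_mod_cast choose_mul_choose_two_mul_mul_choose n k m

section Trinomial

open Polynomial

theorem coeff_one_add_X_add_X_sq_pow_add {R : Type*} [Semiring R] (n k : ℕ) :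
    ((1 + X + X ^ 2 : R[X]) ^ n).coeff (n + k) =
      ∑ m ∈ Finset.range (n + 1), (n.choose m * (n - m).choose (k + m) : R) := by
  have factor : (1 + X + X ^ 2 : R[X]) = 1 + X * (1 + X) := by
    rw [mul_add, mul_one, sq, add_assoc]
  have commute_X : Commute (X : R[X]) (1 + X) := commute_X _
  rw [factor, (Commute.one_left _).add_pow, finsetSum_coeff]
  refine Finset.sum_congr rfl fun m hm => ?_
  have degree_split : n + k = k + m + (n - m) := by grind
  rw [one_pow, one_mul, coeff_mul_natCast, commute_X.mul_pow, degree_split, coeff_X_pow_mul,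
    coeff_one_add_X_pow, (Nat.cast_commute _ _).eq]

theorem coeff_one_add_X_add_X_sq_pow_add_eq_choose_mul_F (n k : ℕ) :
    ((1 + X + X ^ 2 : ℚ[X]) ^ n).coeff (n + k) =
      n.choose k * F (n - k) k :=
  (coeff_one_add_X_add_X_sq_pow_add n k).trans (choose_mul_F_s17 n k).symm

end Trinomial

theorem hEnt_add_one_two_mul (n k : ℕ) :
    hEnt (n + 1) (2 * k) = n * (n - 1).choose (k - 1) * F (n - k) k := by
  have index_eq : n + 1 - k - 1 = n - k := by omega
  rw [hEnt, if_neg (by omega), Nat.mul_div_cancel_left k two_pos, index_eq, Nat.cast_add_one,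
    add_sub_cancel_right, Nat.add_sub_add_right n 1 1]

/-- For `i, k ≥ 1`, one has `h(i,2k) = k·[x^{i+k-1}] (1+x+x²)^{i-1}`, i.e.,
`(i-1)·C(i-2,k-1)·F(i-k-1,k) = k·[x^{i+k-1}] (1+x+x²)^{i-1}`. -/
theorem h_even_eq_coeff (i k : ℕ) (hi : 1 ≤ i) (hk : 1 ≤ k) :
    hEnt i (2 * k) =
      (k : ℚ) *
        ((1 + Polynomial.X + Polynomial.X ^ 2 : Polynomial ℚ) ^ (i - 1)).coeff (i + k - 1) := by
  obtain ⟨n, rfl⟩ := Nat.exists_eq_add_of_le' hi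
  have degree_eq : n + 1 + k - 1 = n + k := by omega
  have absorption : (n * (n - 1).choose (k - 1) : ℚ) = k * n.choose k := by
    exact_mod_cast mul_choose_sub_one_sub_one n (Nat.one_le_iff_ne_zero.mp hk)
  rw [hEnt_add_one_two_mul, absorption, Nat.add_sub_cancel, degree_eq,
    coeff_one_add_X_add_X_sq_pow_add_eq_choose_mul_F, mul_assoc]
end
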